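/- Let f : ℝ² → ℝ² be a C^∞ map with f(0)=0 of the form f = (x, x²y + y⁴ + Σ_{i+j≥5} a_{ij} x^i y^j). Then a_{05} ≠ 0 if and only if f is A-equivalent to (x,y) ↦ (x, x²y + y⁴ + εy⁵) for some ε ∈ {1,−1}, and a_{05} = 0 if and only if f is A-equivalent to (x,y) ↦ (x, x²y + y⁴). Moreover, for all real c and d, the maps (x,y) ↦ (x, x²y + y⁴ + cxy⁴ + dy⁵) and (x,y) ↦ (x, x²y + y⁴ + dy⁵) have A⁵-equivalent 5-jets at the origin. -/

import Mathlib

open Filter Topology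

noncomputable section

/-- Directional derivative of a scalar function. -/
def dop (v : ℝ × ℝ) (g : ℝ × ℝ → ℝ) : ℝ × ℝ → ℝ :=
  fun p => fderiv ℝ g p v

/-- Partial derivative operator in the first coordinate. -/
def pdx : (ℝ × ℝ → ℝ) → ℝ × ℝ → ℝ := dop (1, 0)

/-- Partial derivative operator in the second coordinate. -/
def pdy : (ℝ × ℝ → ℝ) → ℝ × ℝ → ℝ := dop (0, 1)

/-- Taylor coefficient `a_{ij} = ∂_x^i ∂_y^j g(0,0) / (i! j!)` of `g` at the origin. -/
def tcoeff (g : ℝ × ℝ → ℝ) (i j : ℕ) : ℝ :=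
  (pdx^[i] (pdy^[j] g)) 0 / (Nat.factorial i * Nat.factorial j)

/-- The Jacobian determinant `λ_f` of a map `f : ℝ² → ℝ²`. -/
def jacDet (f : ℝ × ℝ → ℝ × ℝ) (p : ℝ × ℝ) : ℝ :=
  (fderiv ℝ f p (1, 0)).1 * (fderiv ℝ f p (0, 1)).2 -
    (fderiv ℝ f p (1, 0)).2 * (fderiv ℝ f p (0, 1)).1

/-- `f` has corank one at `0` : the derivative of `f` at `0` has rank one. -/
def CorankOne (f : ℝ × ℝ → ℝ × ℝ) : Prop :=
  LinearMap.rank ((fderiv ℝ f 0).toLinearMap) = 1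

/-- `η` is a null vector field for `f` near `0`. -/
def IsNullVF (f η : ℝ × ℝ → ℝ × ℝ) : Prop :=
  η 0 ≠ 0 ∧ ∃ U ∈ 𝓝 (0 : ℝ × ℝ),
    ContDiffOn ℝ (⊤ : ℕ∞) η U ∧ ∀ p ∈ U, jacDet f p = 0 → fderiv ℝ f p (η p) = 0

/-- The derivative `(ηg)(p) = Dg(p)(η(p))` of `g` along the vector field `η`. -/
def etaD (η : ℝ × ℝ → ℝ × ℝ) (g : ℝ × ℝ → ℝ) : ℝ × ℝ → ℝ :=
  fun p => fderiv ℝ g p (η p)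

/-- The iterated derivative `η^k g` along the vector field `η`. -/
def etaIter (η : ℝ × ℝ → ℝ × ℝ) : ℕ → (ℝ × ℝ → ℝ) → ℝ × ℝ → ℝ
  | 0, g => g
  | k + 1, g => etaD η (etaIter η k g)

/-- The Hessian matrix of second partial derivatives of `g` at `0`. -/
def hess (g : ℝ × ℝ → ℝ) : Matrix (Fin 2) (Fin 2) ℝ :=
  !![pdx (pdx g) 0, pdx (pdy g) 0; pdy (pdx g) 0, pdy (pdy g) 0]

/-- `A^r`-equivalence of the `r`-jets at `0` of two map-germs `(ℝ²,0) → (ℝ²,0)`. -/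
def JetEquiv (r : ℕ) (f g : ℝ × ℝ → ℝ × ℝ) : Prop :=
  ∃ φ ψ : ℝ × ℝ → ℝ × ℝ,
    ContDiff ℝ (⊤ : ℕ∞) φ ∧ ContDiff ℝ (⊤ : ℕ∞) ψ ∧ φ 0 = 0 ∧ ψ 0 = 0 ∧
    Function.Bijective (⇑(fderiv ℝ φ 0)) ∧ Function.Bijective (⇑(fderiv ℝ ψ 0)) ∧
    ∀ i ≤ r, iteratedFDeriv ℝ i (ψ ∘ f ∘ φ) 0 = iteratedFDeriv ℝ i g 0

/-- `A`-equivalence of two map-germs `(ℝ²,0) → (ℝ²,0)`. -/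
def AEquiv (f g : ℝ × ℝ → ℝ × ℝ) : Prop :=
  ∃ φ ψ : ℝ × ℝ → ℝ × ℝ,
    ContDiff ℝ (⊤ : ℕ∞) φ ∧ ContDiff ℝ (⊤ : ℕ∞) ψ ∧ φ 0 = 0 ∧ ψ 0 = 0 ∧
    Function.Bijective (⇑(fderiv ℝ φ 0)) ∧ Function.Bijective (⇑(fderiv ℝ ψ 0)) ∧
    ∀ᶠ p in 𝓝 (0 : ℝ × ℝ), ψ (f (φ p)) = g p

/-- `f` has the form `(x, g(x,y))` where `g` is `C^∞` and the Taylor coefficients of `g`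
of total degree `< N` at the origin are prescribed by `P`. -/
def HasForm (f : ℝ × ℝ → ℝ × ℝ) (g : ℝ × ℝ → ℝ) (N : ℕ) (P : ℕ → ℕ → ℝ) : Prop :=
  ContDiff ℝ (⊤ : ℕ∞) g ∧ (∀ p, f p = (p.1, g p)) ∧
    ∀ i j, i + j < N → tcoeff g i j = P i j

/-!
Give `x` and `y` the weights `3` and `2`. Then `x²y + y⁴` is homogeneous of degree `8`, `y⁵` has
degree `10`, and every other monomial of order at least `5` has degree at least `11`. Degree by
degree, changes of coordinates remove all terms of degree at least `11` and turn `a y⁵` into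
`cuspForm κ` with `κ = -5 * a / 6`, whose derivative in `y` is `(x² + 4y³)(1 + κ y)`. Borel's lemma
realises the resulting formal conjugation by smooth germs, with an error which is flat at the
origin. A flat perturbation of `cuspForm κ` is first arranged, by flat shears, to vanish doubly on
the cusp `x² + 4y³ = 0`; it is then `(x² + 4y³)²` times a flat function, and the implicit function
theorem removes it. Hence `(x, g)` is equivalent to `(x, x²y + y⁴ + a y⁵)` with `a = a₀₅`, and a
diagonal scaling normalises `a` to its sign. Conversely, comparing the terms of weighted degree less
than `11` in a conjugacy to `(x, x²y + y⁴ + b y⁵)` gives `a = b d` for some `d ≠ 0`.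
-/

open Asymptotics
open scoped ContDiff

universe u

/-! ### Germs of diffeomorphisms and `A`-equivalence -/

theorem exists_contDiff_eventuallyEq {E F : Type*} [NormedAddCommGroup E] [NormedSpace ℝ E]
    [HasContDiffBump E] [NormedAddCommGroup F] [NormedSpace ℝ F] {f : E → F} {x₀ : E}
    (hf : ∀ᶠ x in 𝓝 x₀, ContDiffAt ℝ ∞ f x) :
    ∃ g : E → F, ContDiff ℝ ∞ g ∧ g =ᶠ[𝓝 x₀] f := by
  obtain ⟨r, hr, hfr⟩ := Metric.nhds_basis_closedBall.eventually_iff.1 hf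
  let b : ContDiffBump x₀ := ⟨r / 2, r, by positivity, by linarith⟩
  refine ⟨fun x => b x • f x, contDiff_iff_contDiffAt.2 fun x => ?_, ?_⟩
  · by_cases hx : x ∈ Metric.closedBall x₀ r
    · exact b.contDiffAt.smul (hfr hx)
    · have hzero : (fun x => b x • f x) =ᶠ[𝓝 x] fun _ => 0 := by
        filter_upwards [Metric.isClosed_closedBall.isOpen_compl.mem_nhds hx] with y hy
        have hy' : r < dist y x₀ := by simpa using hy
        rw [b.zero_of_le_dist hy'.le, zero_smul]
      exact contDiffAt_const.congr_of_eventuallyEq hzero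
  · filter_upwards [b.eventuallyEq_one] with x hx
    rw [hx, Pi.one_apply, one_smul]

section DiffeoGerm

variable {E : Type*} [NormedAddCommGroup E] [NormedSpace ℝ E] {φ ψ : E → E}

/-- Germs at the origin of diffeomorphisms fixing the origin, encoded as in `AEquiv`: a globally
smooth representative which need be invertible only near `0`. -/
def IsDiffeoGerm (φ : E → E) : Prop :=
  ContDiff ℝ ∞ φ ∧ φ 0 = 0 ∧ Function.Bijective (fderiv ℝ φ 0)

theorem isDiffeoGerm_id : IsDiffeoGerm (id : E → E) :=
  ⟨contDiff_id, rfl, by rw [fderiv_id]; exact Function.bijective_id⟩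

namespace IsDiffeoGerm

theorem contDiff (h : IsDiffeoGerm φ) : ContDiff ℝ ∞ φ := h.1

theorem map_zero (h : IsDiffeoGerm φ) : φ 0 = 0 := h.2.1

theorem tendsto (h : IsDiffeoGerm φ) : Tendsto φ (𝓝 0) (𝓝 0) := by
  simpa only [h.map_zero] using h.contDiff.continuous.tendsto 0

theorem of_hasFDerivAt_equiv (hφ : ContDiff ℝ ∞ φ) (h0 : φ 0 = 0) {L : E ≃L[ℝ] E}
    (hL : HasFDerivAt φ (L : E →L[ℝ] E) 0) : IsDiffeoGerm φ :=
  ⟨hφ, h0, by rw [hL.fderiv]; exact L.bijective⟩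

theorem comp (hφ : IsDiffeoGerm φ) (hψ : IsDiffeoGerm ψ) : IsDiffeoGerm (φ ∘ ψ) := by
  refine ⟨hφ.contDiff.comp hψ.contDiff, by simp [hφ.map_zero, hψ.map_zero], ?_⟩
  rw [fderiv_comp 0 (hφ.contDiff.differentiable (by simp) _)
    (hψ.contDiff.differentiable (by simp) _), hψ.map_zero]
  exact hφ.2.2.comp hψ.2.2

variable [CompleteSpace E]

theorem exists_hasFDerivAt_equiv (h : IsDiffeoGerm φ) :
    ∃ L : E ≃L[ℝ] E, HasFDerivAt φ (L : E →L[ℝ] E) 0 := by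
  refine ⟨ContinuousLinearEquiv.ofBijective (fderiv ℝ φ 0)
    (LinearMap.ker_eq_bot.2 h.2.2.1) (LinearMap.range_eq_top.2 h.2.2.2), ?_⟩
  rw [ContinuousLinearEquiv.coe_ofBijective]
  exact (h.contDiff.differentiable (by simp) 0).hasFDerivAt

theorem eventually_hasFDerivAt_equiv (h : IsDiffeoGerm φ) :
    ∀ᶠ x in 𝓝 0, ∃ L : E ≃L[ℝ] E, HasFDerivAt φ (L : E →L[ℝ] E) x := by
  obtain ⟨L, hL⟩ := h.exists_hasFDerivAt_equiv
  have hcont : ContinuousAt (fderiv ℝ φ) 0 := (h.contDiff.continuous_fderiv (by simp)).continuousAt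
  filter_upwards [hcont.eventually (hL.fderiv ▸ ContinuousLinearEquiv.nhds L)] with x ⟨M, hM⟩
  exact ⟨M, hM ▸ (h.contDiff.differentiable (by simp) x).hasFDerivAt⟩

variable [HasContDiffBump E]

theorem exists_inverse (h : IsDiffeoGerm φ) :
    ∃ ψ, IsDiffeoGerm ψ ∧ (∀ᶠ p in 𝓝 0, ψ (φ p) = p) ∧ ∀ᶠ p in 𝓝 0, φ (ψ p) = p := by
  obtain ⟨L, hL⟩ := h.exists_hasFDerivAt_equiv
  let e := h.contDiff.contDiffAt.toOpenPartialHomeomorph φ hL (by simp)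
  have h0s : (0 : E) ∈ e.source :=
    h.contDiff.contDiffAt.mem_toOpenPartialHomeomorph_source hL (by simp)
  have he0 : e 0 = 0 := h.map_zero
  have h0t : (0 : E) ∈ e.target := he0 ▸ e.map_source h0s
  have hsymm0 : e.symm 0 = 0 := by simpa only [he0] using e.left_inv h0s
  have hsymm : Tendsto e.symm (𝓝 0) (𝓝 0) := by
    simpa only [ContinuousAt, hsymm0] using e.symm.continuousAt h0t
  obtain ⟨ψ, hψ, hψe⟩ : ∃ ψ : E → E, ContDiff ℝ ∞ ψ ∧ ψ =ᶠ[𝓝 0] e.symm := by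
    refine exists_contDiff_eventuallyEq ?_
    filter_upwards [e.open_target.mem_nhds h0t,
      hsymm.eventually h.eventually_hasFDerivAt_equiv] with y hy ⟨M, hM⟩
    exact e.contDiffAt_symm hy hM h.contDiff.contDiffAt
  have hψ0 : ψ 0 = 0 := by rw [hψe.self_of_nhds, hsymm0]
  have hleft : ∀ᶠ p in 𝓝 0, ψ (φ p) = p := by
    filter_upwards [h.tendsto.eventually hψe, e.open_source.mem_nhds h0s] with p hp hps
    rw [hp]
    exact e.left_inv hps
  have hright : ∀ᶠ p in 𝓝 0, φ (ψ p) = p := by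
    filter_upwards [hψe, e.open_target.mem_nhds h0t] with p hp hpt
    rw [hp]
    exact e.right_inv hpt
  exact ⟨ψ, of_hasFDerivAt_equiv hψ hψ0
    ((hψ0.symm ▸ hL : HasFDerivAt φ (L : E →L[ℝ] E) (ψ 0)).of_local_left_inverse
      hψ.continuous.continuousAt hright), hleft, hright⟩

end IsDiffeoGerm

end DiffeoGerm

namespace AEquiv

variable {f g h : ℝ × ℝ → ℝ × ℝ}

theorem of_comp_eq {S T : ℝ × ℝ → ℝ × ℝ} (hS : IsDiffeoGerm S) (hT : IsDiffeoGerm T)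
    (hST : ∀ᶠ p in 𝓝 0, S (f p) = g (T p)) : AEquiv f g := by
  obtain ⟨T', hT', -, hinv⟩ := hT.exists_inverse
  refine ⟨T', S, hT'.1, hS.1, hT'.2.1, hS.2.1, hT'.2.2, hS.2.2, ?_⟩
  filter_upwards [hT'.tendsto.eventually hST, hinv] with p hp hp'
  rw [hp, hp']

theorem exists_comp_eq (hfg : AEquiv f g) : ∃ S T : ℝ × ℝ → ℝ × ℝ,
    IsDiffeoGerm S ∧ IsDiffeoGerm T ∧ ∀ᶠ p in 𝓝 0, S (f p) = g (T p) := by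
  obtain ⟨φ, ψ, hφ, hψ, hφ0, hψ0, hφb, hψb, hfg⟩ := hfg
  have hφd : IsDiffeoGerm φ := ⟨hφ, hφ0, hφb⟩
  obtain ⟨T, hT, -, hinv⟩ := hφd.exists_inverse
  refine ⟨ψ, T, ⟨hψ, hψ0, hψb⟩, hT, ?_⟩
  filter_upwards [hT.tendsto.eventually hfg, hinv] with p hp hp'
  rw [← hp, hp']

theorem trans (hfg : AEquiv f g) (hgh : AEquiv g h) : AEquiv f h := by
  obtain ⟨S, T, hS, hT, hST⟩ := hfg.exists_comp_eq
  obtain ⟨S', T', hS', hT', hST'⟩ := hgh.exists_comp_eq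
  refine of_comp_eq (hS'.comp hS) (hT'.comp hT) ?_
  filter_upwards [hST, hT.tendsto.eventually hST'] with p hp hp'
  simp only [Function.comp_apply, hp, hp']

theorem symm (hf : ContDiff ℝ ∞ f) (hf0 : f 0 = 0) (hfg : AEquiv f g) : AEquiv g f := by
  obtain ⟨φ, ψ, hφ, hψ, hφ0, hψ0, hφb, hψb, hfg⟩ := hfg
  obtain ⟨S, hS, hinv, -⟩ := IsDiffeoGerm.exists_inverse ⟨hψ, hψ0, hψb⟩
  refine of_comp_eq hS ⟨hφ, hφ0, hφb⟩ ?_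
  have hfφ : Tendsto (f ∘ φ) (𝓝 0) (𝓝 0) := by
    simpa [hφ0, hf0] using (hf.comp hφ).continuous.tendsto 0
  filter_upwards [hfg, hfφ.eventually hinv] with p hp hp'
  rw [← hp]
  exact hp'

theorem jetEquiv (hfg : AEquiv f g) (r : ℕ) : JetEquiv r f g := by
  obtain ⟨φ, ψ, hφ, hψ, hφ0, hψ0, hφb, hψb, hfg⟩ := hfg
  exact ⟨φ, ψ, hφ, hψ, hφ0, hψ0, hφb, hψb, fun i _ =>
    (EventuallyEq.iteratedFDeriv ℝ hfg i).self_of_nhds⟩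

end AEquiv

/-! ### Flat functions -/

theorem contDiff_infty_of_fderiv_stable {E : Type u} [NormedAddCommGroup E] [NormedSpace ℝ E]
    (P : ∀ (F : Type u) [NormedAddCommGroup F] [NormedSpace ℝ F], (E → F) → Prop)
    (hdiff : ∀ (F : Type u) [NormedAddCommGroup F] [NormedSpace ℝ F] (w : E → F),
      P F w → Differentiable ℝ w)
    (hfderiv : ∀ (F : Type u) [NormedAddCommGroup F] [NormedSpace ℝ F] (w : E → F),
      P F w → P (E →L[ℝ] F) (fderiv ℝ w))
    {F : Type u} [NormedAddCommGroup F] [NormedSpace ℝ F] {w : E → F} (hw : P F w) :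
    ContDiff ℝ ∞ w := by
  have hn (n : ℕ) : ∀ (F : Type u) [NormedAddCommGroup F] [NormedSpace ℝ F] (w : E → F),
      P F w → ContDiff ℝ n w := by
    induction n with
    | zero =>
      intro F _ _ w hw
      exact contDiff_zero.2 (hdiff F w hw).continuous
    | succ n ih =>
      intro F _ _ w hw
      rw [Nat.cast_succ, contDiff_succ_iff_fderiv]
      exact ⟨hdiff F w hw, by simp, ih _ _ (hfderiv F w hw)⟩
  exact contDiff_infty.2 fun n => hn n F w hw

section Flat

variable {E F G : Type*} [NormedAddCommGroup E] [NormedSpace ℝ E]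
  [NormedAddCommGroup F] [NormedSpace ℝ F] [NormedAddCommGroup G] [NormedSpace ℝ G]

/-- Smooth functions which are flat at the origin. Flatness is expressed by decay estimates rather
than by the vanishing of all derivatives; for smooth functions the two are equivalent. -/
def IsFlat (h : E → F) : Prop :=
  ContDiff ℝ ∞ h ∧ ∀ n : ℕ, h =O[𝓝 0] fun p => ‖p‖ ^ n

theorem hasFDerivAt_zero_of_isBigO_norm_pow {h : E → F} {n : ℕ} (hn : 1 < n)
    (hh : h =O[𝓝 0] fun p => ‖p‖ ^ n) : HasFDerivAt h (0 : E →L[ℝ] F) 0 :=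
  IsBigO.hasFDerivAt (n := n) (by simpa using hh) hn

theorem norm_fderiv_le_of_norm_le {h : E → F} {p : E} {σ M D : ℝ} (hσ : 0 < σ) (hD : 0 ≤ D)
    (hh : Differentiable ℝ h) (hM : ∀ x ∈ Metric.closedBall p σ, ‖h x‖ ≤ M)
    (hfd : ∀ x ∈ Metric.closedBall p σ, ‖fderiv ℝ h x - fderiv ℝ h p‖ ≤ D) :
    ‖fderiv ℝ h p‖ ≤ 2 * M / σ + D := by
  have hp : p ∈ Metric.closedBall p σ := Metric.mem_closedBall_self hσ.le
  have hM0 : 0 ≤ M := (norm_nonneg _).trans (hM p hp)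
  refine ContinuousLinearMap.opNorm_le_of_unit_norm (by positivity) fun v hv => ?_
  have hvσ : ‖σ • v‖ = σ := by rw [norm_smul, hv, Real.norm_of_nonneg hσ.le, mul_one]
  have hpv : p + σ • v ∈ Metric.closedBall p σ := by simp [hvσ]
  have hmean : ‖h (p + σ • v) - h p - σ • fderiv ℝ h p v‖ ≤ D * σ := by
    simpa [hvσ] using (convex_closedBall p σ).norm_image_sub_le_of_norm_hasFDerivWithin_le'
      (fun x _ => (hh x).hasFDerivAt.hasFDerivWithinAt) hfd hp hpv
  have hsum : σ * ‖fderiv ℝ h p v‖ ≤ 2 * M + D * σ :=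
    calc σ * ‖fderiv ℝ h p v‖ = ‖σ • fderiv ℝ h p v‖ := by
          rw [norm_smul, Real.norm_of_nonneg hσ.le]
      _ = ‖h (p + σ • v) - h p - (h (p + σ • v) - h p - σ • fderiv ℝ h p v)‖ := by
          rw [sub_sub_cancel]
      _ ≤ ‖h (p + σ • v)‖ + ‖h p‖ + D * σ := norm_sub_le_of_le (norm_sub_le _ _) hmean
      _ ≤ 2 * M + D * σ := by linarith [hM p hp, hM _ hpv]
  calc ‖fderiv ℝ h p v‖ ≤ (2 * M + D * σ) / σ := by rwa [le_div_iff₀' hσ]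
    _ = 2 * M / σ + D := by field_simp

namespace IsFlat

variable {h k : E → F}

theorem contDiff (hh : IsFlat h) : ContDiff ℝ ∞ h := hh.1

theorem isBigO (hh : IsFlat h) (n : ℕ) : h =O[𝓝 0] fun p => ‖p‖ ^ n := hh.2 n

theorem map_zero (hh : IsFlat h) : h 0 = 0 := by
  obtain ⟨C, hC⟩ := (hh.isBigO 1).bound
  simpa using hC.self_of_nhds

theorem hasFDerivAt_zero (hh : IsFlat h) : HasFDerivAt h (0 : E →L[ℝ] F) 0 :=
  hasFDerivAt_zero_of_isBigO_norm_pow one_lt_two (hh.isBigO 2)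

theorem of_isBigO {k : E → G} (hh : IsFlat h) (hk : ContDiff ℝ ∞ k) (hkh : k =O[𝓝 0] h) :
    IsFlat k :=
  ⟨hk, fun n => hkh.trans (hh.isBigO n)⟩

theorem congr (hh : IsFlat h) (hk : ContDiff ℝ ∞ k) (hkh : k =ᶠ[𝓝 0] h) : IsFlat k :=
  hh.of_isBigO hk hkh.isBigO

theorem add (hh : IsFlat h) (hk : IsFlat k) : IsFlat fun p => h p + k p :=
  ⟨hh.contDiff.add hk.contDiff, fun n => (hh.isBigO n).add (hk.isBigO n)⟩

theorem neg (hh : IsFlat h) : IsFlat fun p => -h p :=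
  hh.of_isBigO hh.contDiff.neg (isBigO_refl h _).neg_left

theorem sub (hh : IsFlat h) (hk : IsFlat k) : IsFlat fun p => h p - k p :=
  ⟨hh.contDiff.sub hk.contDiff, fun n => (hh.isBigO n).sub (hk.isBigO n)⟩

theorem clm_apply {L : E → F →L[ℝ] G} (hL : ContDiff ℝ ∞ L) (hh : IsFlat h) :
    IsFlat fun p => L p (h p) := by
  refine hh.of_isBigO (hL.clm_apply hh.contDiff) ?_
  have hbound : (fun p => ‖L p‖) =O[𝓝 0] fun _ => (1 : ℝ) :=
    (hL.continuous.continuousAt.norm.isBoundedUnder_le.isBigO_one ℝ).norm_left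
  have hmul : (fun p => ‖L p‖ * ‖h p‖) =O[𝓝 0] fun p => ‖h p‖ := by
    simpa only [one_mul] using hbound.mul (isBigO_refl (fun p => ‖h p‖) _)
  exact (IsBigO.of_bound' (Eventually.of_forall fun p =>
    ((L p).le_opNorm _).trans (le_abs_self _))).trans hmul.of_norm_right

theorem smul {a : E → ℝ} (ha : ContDiff ℝ ∞ a) (hh : IsFlat h) : IsFlat fun p => a p • h p := by
  simpa using hh.clm_apply (L := fun p => a p • ContinuousLinearMap.id ℝ F)
    (ha.smul contDiff_const)

theorem smulRight {a : E → G →L[ℝ] ℝ} (ha : ContDiff ℝ ∞ a) (hh : IsFlat h) :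
    IsFlat fun p => (a p).smulRight (h p) :=
  hh.clm_apply (L := fun p => ContinuousLinearMap.smulRightL ℝ G F (a p))
    (contDiff_const.clm_apply ha)

theorem comp (hh : IsFlat h) {T : G → E} (hT : ContDiff ℝ ∞ T) (hT0 : T 0 = 0) :
    IsFlat fun p => h (T p) := by
  have hTO : T =O[𝓝 0] fun p => p := by
    simpa [hT0] using (hT.differentiable (by simp) 0).isBigO_sub
  refine ⟨hh.contDiff.comp hT, fun n => ?_⟩
  have hT' : Tendsto T (𝓝 0) (𝓝 0) := by simpa only [hT0] using hT.continuous.tendsto 0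
  exact ((hh.isBigO n).comp_tendsto hT').trans (hTO.norm_norm.pow n)

theorem fderiv (hh : IsFlat h) : IsFlat (fderiv ℝ h) := by
  have hsmooth : ContDiff ℝ ∞ (_root_.fderiv ℝ h) := hh.contDiff.fderiv_right (by simp)
  suffices hO : ∀ n : ℕ, n ≠ 0 → _root_.fderiv ℝ h =O[𝓝 0] fun p => ‖p‖ ^ n from
    ⟨hsmooth, fun n => (hO (n + 1) n.succ_ne_zero).trans
      ((isLittleO_norm_pow_norm_pow n.lt_succ_self).isBigO)⟩
  intro n hn
  obtain ⟨K, t, ht, hK⟩ := (hsmooth.of_le (mod_cast le_top)).contDiffAt.exists_lipschitzOnWith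
    (x := (0 : E))
  obtain ⟨C, hC, hbound⟩ := (hh.isBigO (2 * n)).exists_pos
  obtain ⟨r, hr, hrt⟩ := Metric.nhds_basis_closedBall.eventually_iff.1
    ((eventually_mem_set.2 ht).and hbound.bound)
  refine IsBigO.of_bound (2 * (C * 4 ^ n) + K) ?_
  filter_upwards [Metric.closedBall_mem_nhds (0 : E) (half_pos hr),
    Metric.closedBall_mem_nhds (0 : E) one_pos] with p hpr hp1
  rw [mem_closedBall_zero_iff] at hpr hp1
  rcases eq_or_ne p 0 with rfl | hp0
  · simp [hh.hasFDerivAt_zero.fderiv, hn]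
  -- Landau's inequality on the ball of radius `‖p‖ ^ n`, where `h` is `O(‖p‖ ^ (2 * n))`.
  set σ := ‖p‖ ^ n with hσ_def
  have hσ : 0 < σ := pow_pos (norm_pos_iff.2 hp0) n
  have hσp : σ ≤ ‖p‖ := pow_le_of_le_one (norm_nonneg p) hp1 hn
  have hball : ∀ x ∈ Metric.closedBall p σ, ‖x‖ ≤ 2 * ‖p‖ := fun x hx => by
    linarith [norm_le_of_mem_closedBall hx]
  have hball' : ∀ x ∈ Metric.closedBall p σ, x ∈ Metric.closedBall (0 : E) r := fun x hx =>
    mem_closedBall_zero_iff.2 (by linarith [hball x hx])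
  have hM : ∀ x ∈ Metric.closedBall p σ, ‖h x‖ ≤ C * 4 ^ n * (σ * σ) := fun x hx =>
    calc ‖h x‖ ≤ C * ‖x‖ ^ (2 * n) := by simpa using (hrt (hball' x hx)).2
      _ ≤ C * (2 * ‖p‖) ^ (2 * n) := by gcongr; exact hball x hx
      _ = C * 4 ^ n * (σ * σ) := by rw [hσ_def, mul_pow, pow_mul 2]; ring
  have hlip : ∀ x ∈ Metric.closedBall p σ,
      ‖_root_.fderiv ℝ h x - _root_.fderiv ℝ h p‖ ≤ K * σ := fun x hx => by
    rw [← dist_eq_norm]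
    exact (hK.dist_le_mul x (hrt (hball' x hx)).1 p
      (hrt (hball' p (Metric.mem_closedBall_self hσ.le))).1).trans (by gcongr; exact hx)
  calc ‖_root_.fderiv ℝ h p‖ ≤ 2 * (C * 4 ^ n * (σ * σ)) / σ + K * σ :=
        norm_fderiv_le_of_norm_le hσ (by positivity) (hh.contDiff.differentiable (by simp)) hM hlip
    _ = (2 * (C * 4 ^ n) + K) * ‖‖p‖ ^ n‖ := by
        rw [Real.norm_of_nonneg hσ.le]
        field_simp

theorem isBigO_inv_smul {q : E → ℝ} {m : ℕ} (hm : (fun p => ‖p‖ ^ m) =O[𝓝 0] q) (hh : IsFlat h)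
    (n : ℕ) : (fun p => (q p)⁻¹ • h p) =O[𝓝 0] fun p => ‖p‖ ^ n := by
  have hqh : h =O[𝓝 0] fun p => q p * ‖p‖ ^ n :=
    ((hh.isBigO (m + n)).congr_right fun p => pow_add _ _ _).trans (hm.mul (isBigO_refl _ _))
  refine ((isBigO_refl (fun p => (q p)⁻¹) _).smul hqh).trans
    (IsBigO.of_bound' (Eventually.of_forall fun p => ?_))
  rcases eq_or_ne (q p) 0 with h0 | h0
  · simp [h0]
  · rw [smul_eq_mul, inv_mul_cancel_left₀ h0]

theorem fderiv_inv_smul {q : E → ℝ} {m : ℕ} (hq : ContDiff ℝ ∞ q)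
    (hm : (fun p => ‖p‖ ^ m) =O[𝓝 0] q) (hq0 : ∀ p ≠ 0, q p ≠ 0) (hh : IsFlat h) :
    _root_.fderiv ℝ (fun p => (q p)⁻¹ • h p) = fun p =>
      (q p ^ 2)⁻¹ • (q p • _root_.fderiv ℝ h p - (_root_.fderiv ℝ q p).smulRight (h p)) := by
  funext p
  rcases eq_or_ne p 0 with rfl | hp
  · rw [(hasFDerivAt_zero_of_isBigO_norm_pow one_lt_two (hh.isBigO_inv_smul hm 2)).fderiv,
      hh.hasFDerivAt_zero.fderiv, hh.map_zero]
    simp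
  · have hqp := hq0 p hp
    have hd := ((hasDerivAt_inv hqp).comp_hasFDerivAt p
      (hq.differentiable (by simp) p).hasFDerivAt).smul
      (hh.contDiff.differentiable (by simp) p).hasFDerivAt
    refine hd.fderiv.trans ?_
    ext v
    simp only [Function.comp_apply, add_apply, smul_apply, sub_apply, neg_apply, neg_smul,
      ContinuousLinearMap.smulRight_apply, smul_sub, smul_smul, smul_eq_mul]
    rw [sub_eq_add_neg, pow_two, mul_inv, inv_mul_cancel_right₀ hqp]

end IsFlat

end Flat

/-- The Łojasiewicz estimate `‖p‖ ^ m ≤ C |q p|` makes every derivative of `h / q` a flat function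
divided by a power of `q`. -/
theorem IsFlat.inv_smul {E F : Type u} [NormedAddCommGroup E] [NormedSpace ℝ E]
    [NormedAddCommGroup F] [NormedSpace ℝ F] {q : E → ℝ} {h : E → F} {m : ℕ}
    (hq : ContDiff ℝ ∞ q) (hm : (fun p => ‖p‖ ^ m) =O[𝓝 0] q) (hq0 : ∀ p ≠ 0, q p ≠ 0)
    (hh : IsFlat h) : IsFlat fun p => (q p)⁻¹ • h p := by
  refine ⟨contDiff_infty_of_fderiv_stable (fun F _ _ w => ∃ (q : E → ℝ) (h : E → F) (m : ℕ),
    ContDiff ℝ ∞ q ∧ (fun p => ‖p‖ ^ m) =O[𝓝 0] q ∧ (∀ p ≠ 0, q p ≠ 0) ∧ IsFlat h ∧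
      w = fun p => (q p)⁻¹ • h p) ?_ ?_ ⟨q, h, m, hq, hm, hq0, hh, rfl⟩, hh.isBigO_inv_smul hm⟩
  · rintro F _ _ w ⟨q, h, m, hq, hm, hq0, hh, rfl⟩ p
    rcases eq_or_ne p 0 with rfl | hp
    · exact (hasFDerivAt_zero_of_isBigO_norm_pow one_lt_two
        (hh.isBigO_inv_smul hm 2)).differentiableAt
    · exact ((hq.differentiable (by simp) p).inv (hq0 p hp)).smul
        (hh.contDiff.differentiable (by simp) p)
  · rintro F _ _ w ⟨q, h, m, hq, hm, hq0, hh, rfl⟩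
    refine ⟨fun p => q p ^ 2, _, m * 2, hq.pow 2, ?_, fun p hp => pow_ne_zero 2 (hq0 p hp), ?_,
      hh.fderiv_inv_smul hq hm hq0⟩
    · simpa only [pow_mul] using hm.pow 2
    · refine (IsFlat.smul hq hh.fderiv).sub ?_
      exact IsFlat.smulRight (hq.fderiv_right (by simp)) hh

/-! ### Taylor expansion with integral remainder -/

section ParametricIntegral

variable {E F : Type u} [NormedAddCommGroup E] [NormedSpace ℝ E] [FiniteDimensional ℝ E]
  [NormedAddCommGroup F] [NormedSpace ℝ F]

theorem hasFDerivAt_intervalIntegral_of_contDiff {K : E × ℝ → F} (hK : ContDiff ℝ ∞ K) (a b : ℝ)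
    (e : E) : HasFDerivAt (fun e => ∫ τ in a..b, K (e, τ))
      (∫ τ in a..b, (fderiv ℝ K (e, τ)).comp (ContinuousLinearMap.inl ℝ E ℝ)) e := by
  have hK' : Continuous fun p : E × ℝ => (fderiv ℝ K p).comp (ContinuousLinearMap.inl ℝ E ℝ) :=
    (hK.continuous_fderiv (by simp)).clm_comp continuous_const
  obtain ⟨M, hM⟩ := ((isCompact_closedBall e 1).prod isCompact_uIcc).exists_bound_of_continuousOn
    (hK'.continuousOn (s := Metric.closedBall e 1 ×ˢ Set.uIcc a b))
  refine intervalIntegral.hasFDerivAt_integral_of_dominated_of_fderiv_le (bound := fun _ => M)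
    (F' := fun e τ => (fderiv ℝ K (e, τ)).comp (ContinuousLinearMap.inl ℝ E ℝ))
    (Metric.ball_mem_nhds e one_pos)
    (Eventually.of_forall fun x => (hK.continuous.comp (by fun_prop)).aestronglyMeasurable)
    ((hK.continuous.comp (by fun_prop)).intervalIntegrable _ _)
    (hK'.comp (by fun_prop : Continuous fun τ : ℝ => (e, τ))).aestronglyMeasurable
    (Eventually.of_forall fun τ hτ x hx =>
      hM (x, τ) ⟨Metric.ball_subset_closedBall hx, Set.uIoc_subset_uIcc hτ⟩)
    intervalIntegrable_const (Eventually.of_forall fun τ _ x _ => ?_)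
  exact (hK.differentiable (by simp) (x, τ)).hasFDerivAt.comp x (hasFDerivAt_prodMk_left x τ)

theorem contDiff_intervalIntegral {K : E × ℝ → F} (hK : ContDiff ℝ ∞ K) (a b : ℝ) :
    ContDiff ℝ ∞ fun e => ∫ τ in a..b, K (e, τ) := by
  refine contDiff_infty_of_fderiv_stable (fun F _ _ w => ∃ K : E × ℝ → F,
    ContDiff ℝ ∞ K ∧ w = fun e => ∫ τ in a..b, K (e, τ)) ?_ ?_ ⟨K, hK, rfl⟩
  · rintro F _ _ w ⟨K, hK, rfl⟩ e
    exact (hasFDerivAt_intervalIntegral_of_contDiff hK a b e).differentiableAt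
  · rintro F _ _ w ⟨K, hK, rfl⟩
    exact ⟨fun p => (fderiv ℝ K p).comp (ContinuousLinearMap.inl ℝ E ℝ),
      (hK.fderiv_right (by simp)).clm_comp contDiff_const,
      funext fun e => (hasFDerivAt_intervalIntegral_of_contDiff hK a b e).fderiv⟩

end ParametricIntegral

section Taylor

variable {E F : Type u} [NormedAddCommGroup E] [NormedSpace ℝ E] [NormedAddCommGroup F]
  [NormedSpace ℝ F]

/-- The integral remainder of the first order Taylor expansion of `h` along the direction `v`. -/
def taylorRemainder (h : E → F) (v : E) (p : E × ℝ) : F :=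
  ∫ τ in (0 : ℝ)..1, (1 - τ) • fderiv ℝ (fun z => fderiv ℝ h z v) (p.1 + (τ * p.2) • v) v

variable {h : E → F}

theorem contDiff_fderiv_apply (hh : ContDiff ℝ ∞ h) (v : E) :
    ContDiff ℝ ∞ fun p => fderiv ℝ h p v :=
  (hh.fderiv_right (by simp)).clm_apply contDiff_const

theorem contDiff_taylorRemainder [FiniteDimensional ℝ E] (hh : ContDiff ℝ ∞ h) (v : E) :
    ContDiff ℝ ∞ (taylorRemainder h v) := by
  have hD2 := contDiff_fderiv_apply (contDiff_fderiv_apply hh v) v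
  exact contDiff_intervalIntegral (K := fun q : (E × ℝ) × ℝ => (1 - q.2) •
    fderiv ℝ (fun z => fderiv ℝ h z v) (q.1.1 + (q.2 * q.1.2) • v) v)
    ((by fun_prop : ContDiff ℝ ∞ fun q : (E × ℝ) × ℝ => 1 - q.2).smul
      (hD2.comp (by fun_prop : ContDiff ℝ ∞ fun q : (E × ℝ) × ℝ => q.1.1 + (q.2 * q.1.2) • v)))
    0 1

theorem hasDerivAt_apply_add_smul {h : E → F} (hh : Differentiable ℝ h) (p v : E) (s τ : ℝ) :
    HasDerivAt (fun τ : ℝ => h (p + (τ * s) • v)) (s • fderiv ℝ h (p + (τ * s) • v) v) τ := by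
  have hline : HasDerivAt (fun τ : ℝ => p + (τ * s) • v) (s • v) τ := by
    simpa using (((hasDerivAt_id τ).mul_const s).smul_const v).const_add p
  exact ((hh (p + (τ * s) • v)).hasFDerivAt.comp_hasDerivAt τ hline).congr_deriv (map_smul _ _ _)

theorem apply_add_smul_eq_taylorRemainder [CompleteSpace F] (hh : ContDiff ℝ ∞ h) (v p : E)
    (s : ℝ) : h (p + s • v) =
      h p + s • fderiv ℝ h p v + s ^ 2 • taylorRemainder h v (p, s) := by
  have hD := contDiff_fderiv_apply hh v
  have hD2 := contDiff_fderiv_apply hD v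
  have hderiv : ∀ τ ∈ Set.uIcc (0 : ℝ) 1, HasDerivAt
      (fun τ => (1 - τ) • s • fderiv ℝ h (p + (τ * s) • v) v + h (p + (τ * s) • v))
      (s ^ 2 • (1 - τ) • fderiv ℝ (fun z => fderiv ℝ h z v) (p + (τ * s) • v) v) τ := by
    intro τ _
    have hsub : HasDerivAt (fun τ : ℝ => 1 - τ) (-1) τ := by
      simpa using (hasDerivAt_id τ).const_sub 1
    refine ((hsub.smul ((hasDerivAt_apply_add_smul (hD.differentiable (by simp)) p v s τ).const_smul
      s)).add (hasDerivAt_apply_add_smul (hh.differentiable (by simp)) p v s τ)).congr_deriv ?_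
    rw [Pi.smul_apply]
    module
  have hint := intervalIntegral.integral_eq_sub_of_hasDerivAt hderiv
    (Continuous.intervalIntegrable (by fun_prop (disch := exact hD2.continuous)) _ _)
  rw [intervalIntegral.integral_smul] at hint
  rw [taylorRemainder, hint]
  simp only [sub_self, sub_zero, zero_smul, one_smul, zero_mul, one_mul, add_zero, zero_add]
  abel

theorem norm_fst_add_mul_smul_le (p : E × ℝ) (v : E) {τ : ℝ} (hτ : τ ∈ Set.Ioc (0 : ℝ) 1) :
    ‖p.1 + (τ * p.2) • v‖ ≤ (1 + ‖v‖) * ‖p‖ :=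
  calc ‖p.1 + (τ * p.2) • v‖ ≤ ‖p.1‖ + ‖τ * p.2‖ * ‖v‖ :=
        (norm_add_le _ _).trans_eq (by rw [norm_smul])
    _ ≤ ‖p‖ + ‖p‖ * ‖v‖ := by
        gcongr
        · exact norm_fst_le p
        · rw [norm_mul, Real.norm_of_nonneg hτ.1.le]
          exact (mul_le_of_le_one_left (norm_nonneg _) hτ.2).trans (norm_snd_le p)
    _ = (1 + ‖v‖) * ‖p‖ := by ring

theorem isFlat_taylorRemainder [FiniteDimensional ℝ E] (hh : IsFlat h) (v : E) :
    IsFlat (taylorRemainder h v) := by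
  refine ⟨contDiff_taylorRemainder hh.contDiff v, fun n => ?_⟩
  have hD2 : IsFlat fun p => fderiv ℝ (fun z => fderiv ℝ h z v) p v :=
    (hh.fderiv.clm_apply (L := fun _ => ContinuousLinearMap.apply ℝ F v)
      contDiff_const).fderiv.clm_apply (L := fun _ => ContinuousLinearMap.apply ℝ F v)
      contDiff_const
  obtain ⟨C, hC, hbound⟩ := (hD2.isBigO n).exists_pos
  obtain ⟨r, hr, hbr⟩ := Metric.nhds_basis_ball.eventually_iff.1 hbound.bound
  refine IsBigO.of_bound (C * (1 + ‖v‖) ^ n) ?_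
  filter_upwards [Metric.ball_mem_nhds (0 : E × ℝ) (show 0 < r / (1 + ‖v‖) by positivity)]
    with p hp
  rw [mem_ball_zero_iff, lt_div_iff₀' (by positivity)] at hp
  refine (intervalIntegral.norm_integral_le_of_norm_le_const (C := C * ((1 + ‖v‖) * ‖p‖) ^ n)
    fun τ hτ => ?_).trans_eq (by
      rw [sub_zero, abs_one, mul_one, mul_pow, norm_pow, norm_norm, mul_assoc])
  rw [Set.uIoc_of_le zero_le_one] at hτ
  have hline := norm_fst_add_mul_smul_le p v hτ
  have hpτ := hbr (mem_ball_zero_iff.2 (hline.trans_lt hp))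
  rw [norm_smul, Real.norm_of_nonneg (sub_nonneg.2 hτ.2)]
  calc _ ≤ 1 * (C * ‖p.1 + (τ * p.2) • v‖ ^ n) := by
        gcongr
        · linarith [hτ.1]
        · simpa using hpτ
    _ ≤ C * ((1 + ‖v‖) * ‖p‖) ^ n := by
        rw [one_mul]
        gcongr

end Taylor

/-! ### Substituting cube roots into flat functions -/

theorem pow_three_surjective : Function.Surjective fun x : ℝ => x ^ 3 := by
  refine (continuous_pow 3).surjective (tendsto_pow_atTop three_ne_zero) ?_
  have hneg : Tendsto (fun x : ℝ => -(-x) ^ 3) atBot atBot :=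
    tendsto_neg_atTop_atBot.comp
      ((tendsto_pow_atTop three_ne_zero).comp tendsto_neg_atBot_atTop)
  exact hneg.congr fun x => by ring

/-- The real cube root. -/
def cbrt : ℝ ≃o ℝ :=
  (StrictMono.orderIsoOfSurjective (fun x : ℝ => x ^ 3) (Odd.strictMono_pow (by decide))
    pow_three_surjective).symm

theorem cbrt_pow_three (x : ℝ) : cbrt (x ^ 3) = x := cbrt.apply_symm_apply x

theorem pow_three_cbrt (x : ℝ) : cbrt x ^ 3 = x := cbrt.symm_apply_apply x

theorem cbrt_zero : cbrt 0 = 0 := by simpa using cbrt_pow_three 0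

theorem cbrt_ne_zero {x : ℝ} (hx : x ≠ 0) : cbrt x ≠ 0 := fun h => hx (by
  simpa [h] using (pow_three_cbrt x).symm)

theorem contDiffAt_cbrt {x : ℝ} (hx : x ≠ 0) : ContDiffAt ℝ ∞ cbrt x := by
  have hd : HasDerivAt cbrt.symm (3 * cbrt x ^ 2) (cbrt x) := by
    exact_mod_cast hasDerivAt_pow 3 (cbrt x)
  have hx' : 3 * cbrt x ^ 2 ≠ 0 := by have := cbrt_ne_zero hx; positivity
  exact cbrt.symm.toHomeomorph.toOpenPartialHomeomorph.contDiffAt_symm_deriv hx' (Set.mem_univ x)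
    hd (contDiff_id.pow 3).contDiffAt

section

variable {F G : Type u} [NormedAddCommGroup F] [NormedSpace ℝ F]
  [NormedAddCommGroup G] [NormedSpace ℝ G] {W : ℝ × G → F}

theorem IsFlat.isBigO_comp_cbrt (hW : IsFlat W) (n : ℕ) :
    (fun p : ℝ × G => W (cbrt p.1, p.2)) =O[𝓝 0] fun p => ‖p‖ ^ n := by
  have hcont : Continuous fun p : ℝ × G => (cbrt p.1, p.2) :=
    (cbrt.continuous.comp continuous_fst).prodMk continuous_snd
  refine ((hW.isBigO (3 * n)).comp_tendsto (hcont.tendsto' 0 0 (by simp [cbrt_zero]))).trans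
    (IsBigO.of_bound 1 ?_)
  filter_upwards [Metric.closedBall_mem_nhds (0 : ℝ × G) one_pos] with p hp
  rw [mem_closedBall_zero_iff] at hp
  have hcube : ‖(cbrt p.1, p.2)‖ ^ 3 ≤ ‖p‖ := by
    rcases max_cases ‖cbrt p.1‖ ‖p.2‖ with ⟨h, -⟩ | ⟨h, -⟩
    · rw [Prod.norm_mk, h, ← norm_pow, pow_three_cbrt]
      exact norm_fst_le p
    · rw [Prod.norm_mk, h]
      exact (pow_le_of_le_one (norm_nonneg _) ((norm_snd_le p).trans hp) three_ne_zero).trans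
        (norm_snd_le p)
  simpa only [Function.comp_apply, norm_pow, norm_norm, one_mul, pow_mul] using
    pow_le_pow_left₀ (by positivity) hcube n

theorem hasFDerivAt_comp_pow_three {w : ℝ × G → F} {t : ℝ} {y : G}
    (hw : DifferentiableAt ℝ w (t ^ 3, y)) :
    HasFDerivAt (fun q : ℝ × G => w (q.1 ^ 3, q.2)) ((fderiv ℝ w (t ^ 3, y)).comp
      (((3 * t ^ 2) • ContinuousLinearMap.fst ℝ ℝ G).prod (ContinuousLinearMap.snd ℝ ℝ G)))
      (t, y) := by
  refine HasFDerivAt.comp (f := fun q : ℝ × G => (q.1 ^ 3, q.2)) (t, y) hw.hasFDerivAt ?_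
  refine HasFDerivAt.prodMk ?_ hasFDerivAt_snd
  simpa using (hasFDerivAt_fst (𝕜 := ℝ) (p := (t, y))).pow 3

theorem isBigO_fderiv_fst_of_smooth_cbrt (hW : IsFlat W)
    (hs : ∀ p ≠ 0, ContDiffAt ℝ ∞ (fun p : ℝ × G => W (cbrt p.1, p.2)) p) (y : G) :
    (fun t : ℝ => fderiv ℝ W (t, y) (1, 0)) =O[𝓝 0] fun t => ‖t‖ ^ 2 := by
  rcases eq_or_ne y 0 with rfl | hy
  · have hD : IsFlat fun q => fderiv ℝ W q (1, 0) :=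
      hW.fderiv.clm_apply (L := fun _ => ContinuousLinearMap.apply ℝ F (1, 0)) contDiff_const
    simpa [Function.comp_def] using (hD.isBigO 2).comp_tendsto
      (Continuous.tendsto' (by fun_prop) 0 0 (by simp) : Tendsto (fun t : ℝ => (t, (0 : G))) _ _)
  · set w : ℝ × G → F := fun p => W (cbrt p.1, p.2)
    have hwt (t : ℝ) : ContDiffAt ℝ ∞ w (t ^ 3, y) := hs _ fun h => hy (Prod.ext_iff.1 h).2
    have hWw : W = fun q => w (q.1 ^ 3, q.2) := funext fun q => by simp only [w, cbrt_pow_three]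
    have hchain (t : ℝ) :
        fderiv ℝ W (t, y) (1, 0) = t ^ 2 • (3 : ℝ) • fderiv ℝ w (t ^ 3, y) (1, 0) := by
      rw [hWw, (hasFDerivAt_comp_pow_three ((hwt t).differentiableAt (by simp))).fderiv, smul_smul,
        ← map_smul]
      simp [mul_comm]
    have hbound : (fun t : ℝ => (3 : ℝ) • fderiv ℝ w (t ^ 3, y) (1, 0)) =O[𝓝 0]
        fun _ => (1 : ℝ) := by
      have hcont : ContinuousAt (fderiv ℝ w) (0 ^ 3, y) :=
        ((hwt 0).fderiv_right (m := 0) (by simp)).continuousAt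
      have hpow : ContinuousAt (fun t : ℝ => (t ^ 3, y)) 0 := by fun_prop
      have hcomp := ContinuousAt.comp (f := fun t : ℝ => (t ^ 3, y)) hcont hpow
      exact ((hcomp.clm_apply continuousAt_const).const_smul (3 : ℝ)).isBigO_one ℝ
    simpa [hchain] using (isBigO_refl (fun t : ℝ => t ^ 2) (𝓝 0)).smul hbound

theorem exists_isFlat_fderiv_fst_eq_sq_smul [FiniteDimensional ℝ G] [CompleteSpace F]
    (hW : IsFlat W) (hs : ∀ p ≠ 0, ContDiffAt ℝ ∞ (fun p : ℝ × G => W (cbrt p.1, p.2)) p) :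
    ∃ Q : ℝ × G → F, IsFlat Q ∧ ∀ t y, fderiv ℝ W (t, y) (1, 0) = t ^ 2 • Q (t, y) := by
  have hD : IsFlat fun q => fderiv ℝ W q (1, 0) :=
    hW.fderiv.clm_apply (L := fun _ => ContinuousLinearMap.apply ℝ F (1, 0)) contDiff_const
  refine ⟨fun q => taylorRemainder (fun q => fderiv ℝ W q (1, 0)) (1, 0) ((0, q.2), q.1),
    (isFlat_taylorRemainder hD (1, 0)).comp (by fun_prop) rfl, fun t y => ?_⟩
  have hO := isBigO_fderiv_fst_of_smooth_cbrt hW hs y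
  have hzero : fderiv ℝ W (0, y) (1, 0) = 0 := by
    obtain ⟨C, hC⟩ := hO.bound
    simpa using hC.self_of_nhds
  have hderiv : fderiv ℝ (fun q => fderiv ℝ W q (1, 0)) (0, y) (1, 0) = 0 := by
    have h1 : HasDerivAt (fun t : ℝ => fderiv ℝ W (t, y) (1, 0))
        (fderiv ℝ (fun q => fderiv ℝ W q (1, 0)) (0, y) (1, 0)) 0 :=
      HasFDerivAt.comp_hasDerivAt (f := fun t : ℝ => (t, y)) (0 : ℝ)
        (hD.contDiff.differentiable (by simp) (0, y)).hasFDerivAt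
        ((hasDerivAt_id (0 : ℝ)).prodMk (hasDerivAt_const (0 : ℝ) y))
    simpa using h1.unique (hasFDerivAt_zero_of_isBigO_norm_pow one_lt_two hO).hasDerivAt
  simpa [hzero, hderiv] using apply_add_smul_eq_taylorRemainder hD.contDiff (1, 0) (0, y) t

theorem fderiv_comp_cbrt_apply_fst {Q : ℝ × G → F} (hQ : Continuous Q)
    (hWQ : ∀ t y, fderiv ℝ W (t, y) (1, 0) = t ^ 2 • Q (t, y))
    (hs : ∀ p ≠ 0, ContDiffAt ℝ ∞ (fun p : ℝ × G => W (cbrt p.1, p.2)) p) {t : ℝ} {y : G}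
    (hty : (t ^ 3, y) ≠ 0) :
    (3 : ℝ) • fderiv ℝ (fun p : ℝ × G => W (cbrt p.1, p.2)) (t ^ 3, y) (1, 0) = Q (t, y) := by
  set w : ℝ × G → F := fun p => W (cbrt p.1, p.2)
  have hWw : W = fun q => w (q.1 ^ 3, q.2) := funext fun q => by simp only [w, cbrt_pow_three]
  have hne {s : ℝ} (hs0 : s ≠ 0) :
      (3 : ℝ) • fderiv ℝ w (s ^ 3, y) (1, 0) = Q (s, y) := by
    have hsy : (s ^ 3, y) ≠ 0 := fun h => pow_ne_zero 3 hs0 (Prod.ext_iff.1 h).1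
    refine smul_right_injective F (pow_ne_zero 2 hs0) ?_
    simp only [← hWQ]
    rw [hWw, (hasFDerivAt_comp_pow_three ((hs _ hsy).differentiableAt (by simp))).fderiv,
      smul_smul, ← map_smul]
    simp [mul_comm]
  rcases eq_or_ne t 0 with rfl | ht
  · have hcont : ContinuousAt (fderiv ℝ w) (0 ^ 3, y) :=
      ((hs _ hty).fderiv_right (m := 0) (by simp)).continuousAt
    have hpow : ContinuousAt (fun t : ℝ => (t ^ 3, y)) 0 := by fun_prop
    have hcomp := ContinuousAt.comp (f := fun t : ℝ => (t ^ 3, y)) hcont hpow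
    have hlim := ((hcomp.clm_apply (continuousAt_const (y := ((1 : ℝ), (0 : G))))).const_smul
      (3 : ℝ)).tendsto.mono_left (nhdsWithin_le_nhds (s := {0}ᶜ))
    have hQlim : Tendsto (fun s : ℝ => Q (s, y)) (𝓝[≠] 0) (𝓝 (Q (0, y))) :=
      (Continuous.tendsto (by fun_prop : Continuous fun s : ℝ => Q (s, y)) 0).mono_left
        nhdsWithin_le_nhds
    refine tendsto_nhds_unique (hlim.congr' ?_) hQlim
    filter_upwards [self_mem_nhdsWithin] with s hs0 using hne hs0
  · exact hne ht

theorem exists_isFlat_fderiv_comp_cbrt [FiniteDimensional ℝ G] [CompleteSpace F] (hW : IsFlat W)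
    (hs : ∀ p ≠ 0, ContDiffAt ℝ ∞ (fun p : ℝ × G => W (cbrt p.1, p.2)) p) :
    ∃ W' : ℝ × G → ℝ × G →L[ℝ] F, IsFlat W' ∧
      fderiv ℝ (fun p : ℝ × G => W (cbrt p.1, p.2)) = fun p => W' (cbrt p.1, p.2) := by
  obtain ⟨Q, hQ, hWQ⟩ := exists_isFlat_fderiv_fst_eq_sq_smul hW hs
  let R : ℝ × G →L[ℝ] ℝ × G :=
    (ContinuousLinearMap.inr ℝ ℝ G).comp (ContinuousLinearMap.snd ℝ ℝ G)
  have hflat : IsFlat fun q => ((1 / 3 : ℝ) • ContinuousLinearMap.fst ℝ ℝ G).smulRight (Q q) +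
      (fderiv ℝ W q).comp R :=
    (hQ.clm_apply (L := fun _ => ContinuousLinearMap.smulRightL ℝ (ℝ × G) F
      ((1 / 3 : ℝ) • ContinuousLinearMap.fst ℝ ℝ G)) contDiff_const).add
      (hW.fderiv.clm_apply (L := fun _ => ContinuousLinearMap.precomp F R)
        contDiff_const)
  refine ⟨_, hflat, funext fun p => ?_⟩
  rcases eq_or_ne p 0 with rfl | hp
  · refine Eq.trans ?_ (hflat.map_zero.symm.trans (by simp only [Prod.fst_zero, Prod.snd_zero,
      cbrt_zero, Prod.mk_zero_zero]))
    exact (hasFDerivAt_zero_of_isBigO_norm_pow one_lt_two (hW.isBigO_comp_cbrt 2)).fderiv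
  · obtain ⟨t, y⟩ := p
    obtain ⟨t, rfl⟩ := cbrt.symm.surjective t
    change (t ^ 3, y) ≠ 0 at hp
    change fderiv ℝ _ (t ^ 3, y) = _
    have hdiff := (hs _ hp).differentiableAt (by simp)
    have hchain := (hasFDerivAt_comp_pow_three hdiff).fderiv
    simp only [cbrt_pow_three] at hchain
    have hfst := fderiv_comp_cbrt_apply_fst hQ.contDiff.continuous hWQ hs hp
    ext v
    · have hR : R (1, 0) = 0 := by simp [R]
      simp [hR, ← hfst, smul_smul, cbrt]
    · simp [R, hchain]

/-- Differentiating `W (∛x, y)` keeps this shape, because `∂ₜ W (t, y)` is divisible by `t ^ 2`. -/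
theorem IsFlat.comp_cbrt [FiniteDimensional ℝ G] [CompleteSpace F] (hW : IsFlat W)
    (hs : ∀ p ≠ 0, ContDiffAt ℝ ∞ (fun p : ℝ × G => W (cbrt p.1, p.2)) p) :
    IsFlat fun p : ℝ × G => W (cbrt p.1, p.2) := by
  refine ⟨contDiff_infty_of_fderiv_stable (fun F _ _ w => CompleteSpace F ∧ ∃ W : ℝ × G → F,
    IsFlat W ∧ w = (fun p => W (cbrt p.1, p.2)) ∧ ∀ p ≠ 0, ContDiffAt ℝ ∞ w p) ?_ ?_
    ⟨inferInstance, W, hW, rfl, hs⟩, hW.isBigO_comp_cbrt⟩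
  · rintro F _ _ w ⟨-, W, hW, rfl, hs⟩ p
    rcases eq_or_ne p 0 with rfl | hp
    · exact (hasFDerivAt_zero_of_isBigO_norm_pow one_lt_two
        (hW.isBigO_comp_cbrt 2)).differentiableAt
    · exact (hs p hp).differentiableAt (by simp)
  · rintro F _ _ w ⟨_, W, hW, rfl, hs⟩
    obtain ⟨W', hW', hfd⟩ := exists_isFlat_fderiv_comp_cbrt hW hs
    exact ⟨inferInstance, W', hW', hfd, fun p hp => (hs p hp).fderiv_right (by simp)⟩

end

/-! ### Partial derivatives and implicit functions -/

section

variable {k : ℝ × ℝ → ℝ}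

theorem contDiff_pdy (hk : ContDiff ℝ ∞ k) : ContDiff ℝ ∞ (pdy k) :=
  contDiff_fderiv_apply hk (0, 1)

theorem hasDerivAt_pdy (hk : ContDiff ℝ ∞ k) (x y : ℝ) :
    HasDerivAt (fun y => k (x, y)) (pdy k (x, y)) y :=
  HasFDerivAt.comp_hasDerivAt (f := fun y : ℝ => (x, y)) y
    (hk.differentiable (by simp) _).hasFDerivAt
    ((hasDerivAt_const y x).prodMk (hasDerivAt_id y))

theorem apply_add_eq_taylorRemainder (hk : ContDiff ℝ ∞ k) (x y δ : ℝ) :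
    k (x, y + δ) =
      k (x, y) + δ * pdy k (x, y) + δ ^ 2 * taylorRemainder k (0, 1) ((x, y), δ) := by
  simpa [pdy, dop] using apply_add_smul_eq_taylorRemainder hk (0, 1) (x, y) δ

theorem isFlat_comp_shear_sub (hk : ContDiff ℝ ∞ k) {e : ℝ → ℝ} (he : IsFlat e) :
    IsFlat fun p : ℝ × ℝ => k (p.1, p.2 + e p.1) - k p := by
  have hes : ContDiff ℝ ∞ e := he.contDiff
  have hR := contDiff_taylorRemainder hk (0, 1)
  have hd := contDiff_pdy hk
  refine ((he.comp contDiff_fst rfl).smul (a := fun p : ℝ × ℝ => pdy k p +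
    e p.1 * taylorRemainder k (0, 1) (p, e p.1)) (by fun_prop)).congr (by fun_prop)
      (.of_forall fun p => ?_)
  simp only [smul_eq_mul, apply_add_eq_taylorRemainder hk]
  ring

theorem isFlat_pdy (hk : IsFlat k) : IsFlat (pdy k) :=
  hk.fderiv.clm_apply (L := fun _ => ContinuousLinearMap.apply ℝ ℝ (0, 1)) contDiff_const

end

section

variable {E : Type*} [NormedAddCommGroup E] [NormedSpace ℝ E] {F : E × ℝ → ℝ} {m : ℝ}

theorem isDiffeoGerm_fst_prodMk (hF : ContDiff ℝ ∞ F) (hF0 : F 0 = 0)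
    (hd : HasDerivAt (fun y => F (0, y)) m 0) (hm : m ≠ 0) :
    IsDiffeoGerm fun p : E × ℝ => (p.1, F p) := by
  have hFd : HasFDerivAt F (fderiv ℝ F 0) 0 := (hF.differentiable (by simp) 0).hasFDerivAt
  have hFm : fderiv ℝ F 0 (0, 1) = m :=
    (HasFDerivAt.comp_hasDerivAt (f := fun y : ℝ => ((0 : E), y)) (0 : ℝ) hFd
      ((hasDerivAt_const (0 : ℝ) (0 : E)).prodMk (hasDerivAt_id (0 : ℝ)))).unique hd
  have hsplit (a : E) (b : ℝ) : fderiv ℝ F 0 (a, b) = fderiv ℝ F 0 (a, 0) + b * m := by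
    rw [← hFm, ← smul_eq_mul, ← map_smul, ← map_add]
    simp
  refine ⟨contDiff_fst.prodMk hF, by simp [hF0], ?_⟩
  rw [(hasFDerivAt_fst.prodMk hFd).fderiv]
  constructor
  · rintro ⟨a, b⟩ ⟨a', b'⟩ h
    obtain ⟨rfl, h⟩ : a = a' ∧ fderiv ℝ F 0 (a, b) = fderiv ℝ F 0 (a', b') := by simpa using h
    rw [hsplit a b, hsplit a b', add_right_inj, mul_left_inj' hm] at h
    rw [h]
  · rintro ⟨a, b⟩
    refine ⟨(a, (b - fderiv ℝ F 0 (a, 0)) / m), ?_⟩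
    rw [ContinuousLinearMap.prod_apply, hsplit a (_ / m), div_mul_cancel₀ _ hm, add_sub_cancel]
    rfl

theorem isDiffeoGerm_shear {c : E → ℝ} (hc : ContDiff ℝ ∞ c) (hc0 : c 0 = 0) :
    IsDiffeoGerm fun p : E × ℝ => (p.1, p.2 - c p.1) :=
  isDiffeoGerm_fst_prodMk (F := fun p => p.2 - c p.1) (by fun_prop) (by simp [hc0])
    ((hasDerivAt_id' 0).sub_const (c 0)) one_ne_zero

theorem exists_implicit [CompleteSpace E] [HasContDiffBump (E × ℝ)] (hF : ContDiff ℝ ∞ F)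
    (hF0 : F 0 = 0) (hd : HasDerivAt (fun y => F (0, y)) m 0) (hm : m ≠ 0) :
    ∃ W : E → ℝ, ContDiff ℝ ∞ W ∧ W 0 = 0 ∧ ∀ᶠ p in 𝓝 0, F (p, W p) = 0 := by
  obtain ⟨K, hK, -, hinv⟩ := (isDiffeoGerm_fst_prodMk hF hF0 hd hm).exists_inverse
  have hpair : Continuous fun p : E => (p, (0 : ℝ)) := by fun_prop
  refine ⟨fun p => (K (p, 0)).2, (hK.contDiff.comp (contDiff_id.prodMk contDiff_const)).snd,
    congrArg Prod.snd hK.map_zero, ?_⟩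
  filter_upwards [(hpair.tendsto' 0 0 rfl).eventually hinv] with p hp
  obtain ⟨hfst, hsnd⟩ := Prod.ext_iff.1 hp
  rwa [show (p, (K (p, 0)).2) = K (p, 0) from Prod.ext hfst.symm rfl]

end

/-! ### Functions vanishing doubly on the cusp -/

/-- The equation of the cusp `{(2 * t ^ 3, -t ^ 2)}`, the critical set of `x²y + y⁴` in the
direction of `y`. -/
def cuspPoly (p : ℝ × ℝ) : ℝ := p.1 ^ 2 + 4 * p.2 ^ 3

theorem contDiff_cuspPoly : ContDiff ℝ ∞ cuspPoly := by unfold cuspPoly; fun_prop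

theorem cuspPoly_apply (t y : ℝ) :
    cuspPoly (2 * t ^ 3, y) = 4 * (y + t ^ 2) * (y ^ 2 - y * t ^ 2 + t ^ 4) := by
  simp only [cuspPoly]; ring

theorem cusp_cofactor_pos {p : ℝ × ℝ} (hp : p ≠ 0) : 0 < p.2 ^ 2 - p.2 * p.1 ^ 2 + p.1 ^ 4 := by
  obtain ⟨t, y⟩ := p
  rcases eq_or_ne t 0 with rfl | ht
  · have hy : y ≠ 0 := fun h => hp (by simp [h])
    simpa using pow_pos (abs_pos.2 hy) 2
  · nlinarith [sq_nonneg (y - t ^ 2 / 2), pow_pos (sq_pos_of_ne_zero ht) 2]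

theorem norm_pow_four_isBigO_cusp_cofactor :
    (fun p : ℝ × ℝ => ‖p‖ ^ 4) =O[𝓝 0] fun p => p.2 ^ 2 - p.2 * p.1 ^ 2 + p.1 ^ 4 := by
  refine IsBigO.of_bound 2 ?_
  filter_upwards [Metric.closedBall_mem_nhds (0 : ℝ × ℝ) one_pos] with ⟨t, y⟩ hp
  have hy : y ^ 4 ≤ y ^ 2 := by
    have hy1 : |y| ≤ 1 := (norm_snd_le (t, y)).trans (mem_closedBall_zero_iff.1 hp)
    nlinarith [sq_nonneg y, sq_le_one_iff_abs_le_one y |>.2 hy1]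
  have hnorm : ‖(t, y)‖ ^ 4 ≤ t ^ 4 + y ^ 2 := by
    rcases max_cases ‖t‖ ‖y‖ with ⟨h, -⟩ | ⟨h, -⟩
    all_goals rw [Prod.norm_mk, h, Real.norm_eq_abs, Even.pow_abs (by decide)]
    · nlinarith [sq_nonneg y]
    · nlinarith [sq_nonneg (t ^ 2)]
  rw [norm_pow, norm_norm]
  refine hnorm.trans (le_trans ?_ (mul_le_mul_of_nonneg_left (Real.le_norm_self _) two_pos.le))
  nlinarith [sq_nonneg (y - t ^ 2)]

theorem exists_isFlat_eq_cuspPoly_sq_mul_param {k : ℝ × ℝ → ℝ} (hk : IsFlat k)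
    (hk0 : ∀ t : ℝ, k (2 * t ^ 3, -t ^ 2) = 0) (hk1 : ∀ t : ℝ, pdy k (2 * t ^ 3, -t ^ 2) = 0) :
    ∃ W : ℝ × ℝ → ℝ, IsFlat W ∧
      ∀ t y, k (2 * t ^ 3, y) = cuspPoly (2 * t ^ 3, y) ^ 2 * W (t, y) := by
  let q : ℝ × ℝ → ℝ := fun p => 16 * (p.2 ^ 2 - p.2 * p.1 ^ 2 + p.1 ^ 4) ^ 2
  let Q : ℝ × ℝ → ℝ := fun p =>
    taylorRemainder k (0, 1) ((2 * p.1 ^ 3, -p.1 ^ 2), p.1 ^ 2 + p.2)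
  have hq0 (p : ℝ × ℝ) (hp : p ≠ 0) : q p ≠ 0 := by have := cusp_cofactor_pos hp; positivity
  have hq : (fun p : ℝ × ℝ => ‖p‖ ^ 8) =O[𝓝 0] q :=
    ((norm_pow_four_isBigO_cusp_cofactor.pow 2).congr_left fun p => by ring).const_mul_right
      (by norm_num)
  have hQ : IsFlat Q := (isFlat_taylorRemainder hk (0, 1)).comp (by fun_prop) (by simp)
  refine ⟨_, hQ.inv_smul (by fun_prop) hq hq0, fun t y => ?_⟩
  have hkQ : k (2 * t ^ 3, y) = (t ^ 2 + y) ^ 2 * Q (t, y) := by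
    have h := apply_add_eq_taylorRemainder hk.contDiff (2 * t ^ 3) (-t ^ 2) (t ^ 2 + y)
    rwa [hk0, hk1, mul_zero, zero_add, zero_add, neg_add_cancel_left] at h
  rcases eq_or_ne (t, y) 0 with h | h
  · rw [hkQ, h, hQ.map_zero, smul_zero, mul_zero, mul_zero]
  · have hqi := mul_inv_cancel₀ (hq0 _ h)
    simp only [q] at hqi
    rw [hkQ, cuspPoly_apply, smul_eq_mul]
    linear_combination (-(t ^ 2 + y) ^ 2 * Q (t, y)) * hqi

/-- The cusp is parametrised by the cube root of `x`, so the quotient is first formed in the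
parameter `t` and then pushed down by `IsFlat.comp_cbrt`. -/
theorem exists_isFlat_eq_cuspPoly_sq_mul {k : ℝ × ℝ → ℝ} (hk : IsFlat k)
    (hk0 : ∀ t : ℝ, k (2 * t ^ 3, -t ^ 2) = 0) (hk1 : ∀ t : ℝ, pdy k (2 * t ^ 3, -t ^ 2) = 0) :
    ∃ w : ℝ × ℝ → ℝ, IsFlat w ∧ ∀ p, k p = cuspPoly p ^ 2 * w p := by
  obtain ⟨W, hW, hkW⟩ := exists_isFlat_eq_cuspPoly_sq_mul_param hk hk0 hk1
  have hkW' (p : ℝ × ℝ) : k (2 * p.1, p.2) = cuspPoly (2 * p.1, p.2) ^ 2 * W (cbrt p.1, p.2) := by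
    simpa only [pow_three_cbrt] using hkW (cbrt p.1) p.2
  have hw : IsFlat fun p : ℝ × ℝ => W (cbrt p.1, p.2) := by
    refine hW.comp_cbrt fun p hp => ?_
    rcases eq_or_ne p.1 0 with hx | hx
    · have hy : p.2 ≠ 0 := fun h => hp (Prod.ext hx h)
      have hP : ContDiff ℝ ∞ fun p : ℝ × ℝ => cuspPoly (2 * p.1, p.2) :=
        contDiff_cuspPoly.comp (by fun_prop)
      have hPp : cuspPoly (2 * p.1, p.2) ≠ 0 := by simp [cuspPoly, hx, hy]
      have hkd : ContDiff ℝ ∞ fun p : ℝ × ℝ => k (2 * p.1, p.2) := hk.contDiff.comp (by fun_prop)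
      refine (hkd.contDiffAt.div (hP.contDiffAt.pow 2) (pow_ne_zero 2 hPp))
        |>.congr_of_eventuallyEq ?_
      filter_upwards [hP.continuous.continuousAt.eventually_ne hPp] with r hr
      rw [Pi.div_apply, hkW', mul_div_cancel_left₀ _ (pow_ne_zero 2 hr)]
    · exact hW.contDiff.contDiffAt.comp p
        (((contDiffAt_cbrt hx).comp p contDiffAt_fst).prodMk contDiffAt_snd)
  refine ⟨_, hw.comp (T := fun p : ℝ × ℝ => (p.1 / 2, p.2)) (by fun_prop) (by simp), fun p => ?_⟩
  simpa [mul_div_cancel₀] using hkW' (p.1 / 2, p.2)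

theorem exists_isFlat_eventuallyEq_cuspPoly_sq_mul {k : ℝ × ℝ → ℝ} (hk : IsFlat k)
    (hk0 : ∀ᶠ t : ℝ in 𝓝 0, k (2 * t ^ 3, -t ^ 2) = 0 ∧ pdy k (2 * t ^ 3, -t ^ 2) = 0) :
    ∃ w : ℝ × ℝ → ℝ, IsFlat w ∧ k =ᶠ[𝓝 0] fun p => cuspPoly p ^ 2 * w p := by
  have hcont : Continuous fun x : ℝ => cbrt (x / 2) := cbrt.continuous.comp (by fun_prop)
  have hx := (hcont.tendsto' 0 0 (by simp [cbrt_zero])).eventually hk0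
  simp only [pow_three_cbrt, mul_div_cancel₀ _ (two_ne_zero' ℝ)] at hx
  obtain ⟨r, hr, hrx⟩ := Metric.nhds_basis_closedBall.eventually_iff.1 hx
  let χ : ContDiffBump (0 : ℝ) := ⟨r / 2, r, by positivity, by linarith⟩
  have hzero (t : ℝ) : χ (2 * t ^ 3) = 0 ∨
      k (2 * t ^ 3, -t ^ 2) = 0 ∧ pdy k (2 * t ^ 3, -t ^ 2) = 0 := by
    rcases le_total r (dist (2 * t ^ 3) 0) with h | h
    · exact .inl (χ.zero_of_le_dist h)
    · refine .inr ?_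
      simpa [mul_div_cancel_left₀, cbrt_pow_three] using hrx (Metric.mem_closedBall.2 h)
  have hχk : IsFlat fun p : ℝ × ℝ => χ p.1 • k p := hk.smul (χ.contDiff.comp contDiff_fst)
  have hpdy (x y : ℝ) : pdy (fun p : ℝ × ℝ => χ p.1 • k p) (x, y) = χ x * pdy k (x, y) :=
    (hasDerivAt_pdy hχk.contDiff x y).unique ((hasDerivAt_pdy hk.contDiff x y).const_mul (χ x))
  obtain ⟨w, hw, hkw⟩ := exists_isFlat_eq_cuspPoly_sq_mul hχk
    (fun t => mul_eq_zero.2 ((hzero t).imp_right And.left))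
    (fun t => by rw [hpdy]; exact mul_eq_zero.2 ((hzero t).imp_right And.right))
  refine ⟨w, hw, ?_⟩
  filter_upwards [continuous_fst.continuousAt.eventually χ.eventuallyEq_one] with p hp
  rw [← hkw, hp, Pi.one_apply, one_smul]

/-! ### Removing flat perturbations -/

/-- The intermediate normal form: its derivative in `y` is `cuspPoly · (1 + κ y)`, so that, near the
origin, it has the same critical points as `x²y + y⁴`. -/
def cuspForm (κ : ℝ) (p : ℝ × ℝ) : ℝ :=
  p.1 ^ 2 * p.2 + p.2 ^ 4 + κ * (p.1 ^ 2 * p.2 ^ 2 / 2 + 4 * p.2 ^ 5 / 5)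

section

variable (κ : ℝ)

theorem contDiff_cuspForm : ContDiff ℝ ∞ (cuspForm κ) := by unfold cuspForm; fun_prop

theorem pdy_cuspForm (p : ℝ × ℝ) : pdy (cuspForm κ) p = cuspPoly p * (1 + κ * p.2) := by
  obtain ⟨x, y⟩ := p
  refine (hasDerivAt_pdy (contDiff_cuspForm κ) x y).unique ?_
  have hcubic := ((hasDerivAt_id y).const_mul (x ^ 2)).add (hasDerivAt_pow 4 y)
  have hquintic := (((hasDerivAt_pow 2 y).const_mul (x ^ 2)).div_const 2).add
    (((hasDerivAt_pow 5 y).const_mul 4).div_const 5)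
  refine (hcubic.add (hquintic.const_mul κ)).congr_deriv ?_
  simp only [cuspPoly, mul_one, Nat.cast_ofNat, Nat.add_one_sub_one, pow_one]
  ring

theorem cuspForm_add (x y δ : ℝ) : cuspForm κ (x, y + δ) =
    cuspForm κ (x, y) + δ * (cuspPoly (x, y) * (1 + κ * y)) +
      δ ^ 2 * taylorRemainder (cuspForm κ) (0, 1) ((x, y), δ) := by
  rw [apply_add_eq_taylorRemainder (contDiff_cuspForm κ), pdy_cuspForm]

/-- Solve `cuspForm κ (x, y + cuspPoly η) = cuspForm κ + cuspPoly² w` for `η`. -/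
theorem aequiv_cuspForm_add_cuspPoly_sq_mul {w : ℝ × ℝ → ℝ} (hw : ContDiff ℝ ∞ w) (hw0 : w 0 = 0) :
    AEquiv (fun p => (p.1, cuspForm κ p + cuspPoly p ^ 2 * w p))
      fun p => (p.1, cuspForm κ p) := by
  have hP := contDiff_cuspPoly
  let R : (ℝ × ℝ) × ℝ → ℝ := taylorRemainder (cuspForm κ) (0, 1)
  have hR : ContDiff ℝ ∞ R := contDiff_taylorRemainder (contDiff_cuspForm κ) _
  obtain ⟨η, hη, -, hηw⟩ := exists_implicit (m := 1)
    (F := fun q : (ℝ × ℝ) × ℝ =>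
      q.2 * (1 + κ * q.1.2) + q.2 ^ 2 * R (q.1, cuspPoly q.1 * q.2) - w q.1)
    (by fun_prop) (by simp [hw0])
    (by simpa [cuspPoly, hw0] using (hasDerivAt_id' (0 : ℝ)).fun_add
          ((hasDerivAt_pow 2 (0 : ℝ)).mul_const (R (0, 0)))) one_ne_zero
  have hY : ContDiff ℝ ∞ fun p : ℝ × ℝ => p.2 + cuspPoly p * η p := by fun_prop
  have hYd : HasDerivAt (fun y : ℝ => y + cuspPoly (0, y) * η (0, y)) 1 0 := by
    simpa [cuspPoly] using (hasDerivAt_id' (0 : ℝ)).fun_add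
      (((hasDerivAt_pow 3 (0 : ℝ)).const_mul 4).fun_mul (hasDerivAt_pdy hη 0 0))
  refine AEquiv.of_comp_eq (S := id) (T := fun p => (p.1, p.2 + cuspPoly p * η p)) isDiffeoGerm_id
    (isDiffeoGerm_fst_prodMk (m := 1) hY (by simp [cuspPoly]) hYd one_ne_zero) ?_
  filter_upwards [hηw] with p hp
  obtain ⟨x, y⟩ := p
  simp only [id, cuspForm_add, Prod.mk.injEq, true_and]
  linear_combination - cuspPoly (x, y) ^ 2 * hp

end

theorem IsFlat.exists_comp_cusp {E : ℝ → ℝ} (hE : IsFlat E) :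
    ∃ e : ℝ → ℝ, IsFlat e ∧ ∀ t, e (2 * t ^ 3) = E t := by
  have hcbrt : IsFlat fun p : ℝ × PUnit.{1} => E (cbrt p.1) := by
    refine (hE.comp contDiff_fst rfl).comp_cbrt fun p hp => ?_
    have hp1 : p.1 ≠ 0 := fun h => hp (Prod.ext h (Subsingleton.elim _ _))
    exact hE.contDiff.contDiffAt.comp p ((contDiffAt_cbrt hp1).comp p contDiffAt_fst)
  refine ⟨_, hcbrt.comp (T := fun x => (x / 2, PUnit.unit)) (by fun_prop) (by simp),
    fun t => ?_⟩
  simp [cbrt_pow_three]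

theorem IsFlat.of_mul_add_eq_zero {E : Type u} [NormedAddCommGroup E] [NormedSpace ℝ E]
    {W U k : E → ℝ} (hW : ContDiff ℝ ∞ W) (hU : ContinuousAt U 0) (hU0 : U 0 ≠ 0) (hk : IsFlat k)
    (h : ∀ᶠ p in 𝓝 0, W p * U p + k p = 0) : IsFlat W := by
  refine hk.of_isBigO hW ?_
  have hUk : W =ᶠ[𝓝 0] fun p => -(U p)⁻¹ * k p := by
    filter_upwards [h, hU.eventually_ne hU0] with p hp hUp
    field_simp
    linear_combination hp
  refine hUk.trans_isBigO ?_
  simpa using ((hU.inv₀ hU0).neg.isBigO_one ℝ).mul (isBigO_refl k _)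

theorem IsFlat.exists_eq_normSq_mul {h : ℝ × ℝ → ℝ} (hh : IsFlat h) :
    ∃ k : ℝ × ℝ → ℝ, IsFlat k ∧ ∀ p, h p = (p.1 ^ 2 + p.2 ^ 2) ^ 2 * k p := by
  have hne (p : ℝ × ℝ) (hp : p ≠ 0) : (p.1 ^ 2 + p.2 ^ 2) ^ 2 ≠ 0 := by
    contrapose! hp
    obtain ⟨h1, h2⟩ := (add_eq_zero_iff_of_nonneg (sq_nonneg p.1) (sq_nonneg p.2)).1
      (pow_eq_zero_iff two_ne_zero |>.1 hp)
    exact Prod.ext (pow_eq_zero_iff two_ne_zero |>.1 h1) (pow_eq_zero_iff two_ne_zero |>.1 h2)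
  have hO : (fun p : ℝ × ℝ => ‖p‖ ^ 4) =O[𝓝 0] fun p => (p.1 ^ 2 + p.2 ^ 2) ^ 2 := by
    refine .of_norm_le fun p => ?_
    have hsq : ‖p‖ ^ 2 ≤ p.1 ^ 2 + p.2 ^ 2 := by
      rcases max_choice ‖p.1‖ ‖p.2‖ with h | h <;>
        rw [Prod.norm_def, h, Real.norm_eq_abs, sq_abs] <;> nlinarith
    simpa [← pow_mul] using pow_le_pow_left₀ (sq_nonneg ‖p‖) hsq 2
  refine ⟨_, hh.inv_smul (by fun_prop) hO hne, fun p => ?_⟩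
  rcases eq_or_ne p 0 with rfl | hp
  · simp [hh.map_zero]
  · rw [smul_eq_mul, mul_inv_cancel_left₀ (hne p hp)]

section

variable (κ : ℝ) {h : ℝ × ℝ → ℝ}

theorem exists_isFlat_critical_curve (hh : IsFlat h) :
    ∃ E : ℝ → ℝ, IsFlat E ∧ ∀ᶠ t in 𝓝 (0 : ℝ),
      pdy (cuspForm κ) (2 * t ^ 3, -t ^ 2 + E t) + pdy h (2 * t ^ 3, -t ^ 2 + E t) = 0 := by
  obtain ⟨k, hk, hkh⟩ := (isFlat_pdy hh).exists_eq_normSq_mul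
  -- On the curve `y = -t² + t⁴ s`, both terms are divisible by `t⁸`.
  let γ : ℝ × ℝ → ℝ × ℝ := fun p => (2 * p.1 ^ 3, -p.1 ^ 2 + p.1 ^ 4 * p.2)
  let U : ℝ × ℝ → ℝ := fun p => 4 * (3 - 3 * p.1 ^ 2 * p.2 + p.1 ^ 4 * p.2 ^ 2) *
    (1 + κ * (-p.1 ^ 2 + p.1 ^ 4 * p.2))
  let V : ℝ × ℝ → ℝ := fun p => (4 * p.1 ^ 2 + (1 - p.1 ^ 2 * p.2) ^ 2) ^ 2
  have hγ : ContDiff ℝ ∞ γ := by fun_prop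
  have hU : ContDiff ℝ ∞ U := by fun_prop
  have hV : ContDiff ℝ ∞ V := by fun_prop
  have hks : ContDiff ℝ ∞ k := hk.contDiff
  have hk0 : k (0, 0) = 0 := hk.map_zero
  obtain ⟨W, hW, hW0, hWe⟩ := exists_implicit
    (F := fun p : ℝ × ℝ => p.2 * U p + V p * k (γ p)) (by fun_prop)
    (by simp [γ, hk0])
    (by simpa [U, γ, hk0] using (hasDerivAt_id' (0 : ℝ)).mul_const (4 * 3))
    (by norm_num : (4 * 3 : ℝ) ≠ 0)
  have hpair : ContDiff ℝ ∞ fun t : ℝ => (t, W t) := contDiff_id.prodMk hW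
  have hWflat : IsFlat W := by
    refine IsFlat.of_mul_add_eq_zero hW (hU.comp hpair).continuous.continuousAt
      (by simp [U, hW0]) ?_ hWe
    exact (hk.comp (hγ.comp hpair) (by simp [γ])).smul (hV.comp hpair)
  refine ⟨fun t => t ^ 4 * W t, hWflat.smul (by fun_prop), ?_⟩
  filter_upwards [hWe] with t ht
  rw [pdy_cuspForm, hkh]
  simp only [cuspPoly]
  simp only [U, V, γ] at ht
  linear_combination t ^ 8 * ht

theorem exists_isFlat_critical_value (hh : IsFlat h) :
    ∃ e c : ℝ → ℝ, IsFlat e ∧ IsFlat c ∧ ∀ᶠ t in 𝓝 (0 : ℝ),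
      cuspForm κ (2 * t ^ 3, -t ^ 2 + e (2 * t ^ 3)) + h (2 * t ^ 3, -t ^ 2 + e (2 * t ^ 3)) =
        cuspForm κ (2 * t ^ 3, -t ^ 2) + c (2 * t ^ 3) ∧
      pdy (cuspForm κ) (2 * t ^ 3, -t ^ 2 + e (2 * t ^ 3)) +
        pdy h (2 * t ^ 3, -t ^ 2 + e (2 * t ^ 3)) = 0 := by
  obtain ⟨E, hE, hcrit⟩ := exists_isFlat_critical_curve κ hh
  have hEs : ContDiff ℝ ∞ E := hE.contDiff
  have hR := contDiff_taylorRemainder (contDiff_cuspForm κ) (0, 1)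
  have hC : IsFlat fun t => E t ^ 2 * taylorRemainder (cuspForm κ) (0, 1)
      ((2 * t ^ 3, -t ^ 2), E t) + h (2 * t ^ 3, -t ^ 2 + E t) := by
    refine .add ?_ (hh.comp (by fun_prop) (by simp [hE.map_zero]))
    refine (hE.smul (a := fun t => E t * taylorRemainder (cuspForm κ) (0, 1)
      ((2 * t ^ 3, -t ^ 2), E t)) (by fun_prop)).congr (by fun_prop) (.of_forall fun t => ?_)
    simp only [smul_eq_mul]
    ring
  obtain ⟨e, he, heE⟩ := hE.exists_comp_cusp
  obtain ⟨c, hc, hcC⟩ := hC.exists_comp_cusp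
  refine ⟨e, c, he, hc, ?_⟩
  filter_upwards [hcrit] with t ht
  rw [heE, hcC, cuspForm_add]
  refine ⟨?_, ht⟩
  simp only [cuspPoly]
  ring

theorem IsFlat.exists_cuspForm_add_comp_shear_eq (hh : IsFlat h) :
    ∃ (e c : ℝ → ℝ) (w : ℝ × ℝ → ℝ), IsFlat e ∧ IsFlat c ∧ IsFlat w ∧ ∀ᶠ p in 𝓝 (0 : ℝ × ℝ),
      cuspForm κ (p.1, p.2 + e p.1) + h (p.1, p.2 + e p.1) - c p.1 =
        cuspForm κ p + cuspPoly p ^ 2 * w p := by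
  obtain ⟨e, c, he, hc, hec⟩ := exists_isFlat_critical_value κ hh
  have hes : ContDiff ℝ ∞ e := he.contDiff
  have hcs : ContDiff ℝ ∞ c := hc.contDiff
  have hhs : ContDiff ℝ ∞ h := hh.contDiff
  have hG := contDiff_cuspForm κ
  let k : ℝ × ℝ → ℝ := fun p =>
    cuspForm κ (p.1, p.2 + e p.1) + h (p.1, p.2 + e p.1) - c p.1 - cuspForm κ p
  have hk : IsFlat k :=
    ((isFlat_comp_shear_sub (hG.add hhs) he).add (hh.sub (hc.comp contDiff_fst rfl))).congr
      (by fun_prop) (.of_forall fun p => by simp only [k]; ring)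
  have hkpdy (x y : ℝ) : pdy k (x, y) = pdy (cuspForm κ) (x, y + e x) + pdy h (x, y + e x) -
      pdy (cuspForm κ) (x, y) := by
    refine (hasDerivAt_pdy hk.contDiff x y).unique ?_
    exact ((((hasDerivAt_pdy hG x (y + e x)).comp_add_const y (e x)).fun_add
      ((hasDerivAt_pdy hhs x (y + e x)).comp_add_const y (e x))).sub_const (c x)).fun_sub
      (hasDerivAt_pdy hG x y)
  obtain ⟨w, hw, hkw⟩ := exists_isFlat_eventuallyEq_cuspPoly_sq_mul hk (by
    filter_upwards [hec] with t ht
    refine ⟨by linear_combination ht.1, ?_⟩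
    rw [hkpdy, ht.2, pdy_cuspForm]
    simp only [cuspPoly]
    ring)
  exact ⟨e, c, w, he, hc, hw, hkw.mono fun p hp => sub_eq_iff_eq_add'.1 hp⟩

theorem IsFlat.aequiv_cuspForm_add (hh : IsFlat h) :
    AEquiv (fun p => (p.1, cuspForm κ p + h p)) fun p => (p.1, cuspForm κ p) := by
  obtain ⟨e, c, w, he, hc, hw, hecw⟩ := hh.exists_cuspForm_add_comp_shear_eq κ
  refine AEquiv.trans ?_ (aequiv_cuspForm_add_cuspPoly_sq_mul κ hw.contDiff hw.map_zero)
  have hT := isDiffeoGerm_shear he.contDiff he.map_zero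
  refine AEquiv.of_comp_eq (isDiffeoGerm_shear hc.contDiff hc.map_zero) hT ?_
  filter_upwards [hT.tendsto.eventually hecw] with p hp
  simpa only [sub_add_cancel, Prod.mk.injEq, true_and] using hp

end

/-! ### Weighted order -/

section WeightedOrder

variable {w : ℕ × ℕ} {k l : ℕ} {u v : ℝ × ℝ → ℝ}

/-- The filter of pairs `(s, p)` with `s → 0⁺` and `p` in the box `|x| ≤ s ^ w.1`, `|y| ≤ s ^ w.2`.
It expresses estimates which are uniform on these shrinking boxes. -/
def weightedBoxes (w : ℕ × ℕ) : Filter (ℝ × ℝ × ℝ) :=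
  (𝓝[>] 0 ×ˢ ⊤) ⊓ 𝓟 {q | ‖q.2.1‖ ≤ q.1 ^ w.1 ∧ ‖q.2.2‖ ≤ q.1 ^ w.2}

/-- The function `u` vanishes at the origin to order at least `k` when the two coordinates are given
the weights `w.1` and `w.2`. -/
def HasWeightedOrder (w : ℕ × ℕ) (k : ℕ) (u : ℝ × ℝ → ℝ) : Prop :=
  (fun q : ℝ × ℝ × ℝ => u q.2) =O[weightedBoxes w] fun q => q.1 ^ k

theorem tendsto_weightedBoxes {α : Type*} {a : Filter α} {σ : α → ℝ} {g : α → ℝ × ℝ} :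
    Tendsto (fun i => (σ i, g i)) a (weightedBoxes w) ↔
      Tendsto σ a (𝓝[>] 0) ∧ ∀ᶠ i in a, ‖(g i).1‖ ≤ σ i ^ w.1 ∧ ‖(g i).2‖ ≤ σ i ^ w.2 := by
  simp only [weightedBoxes, tendsto_inf, tendsto_prod_iff', tendsto_top, and_true,
    tendsto_principal, Set.mem_ofPred_eq]

theorem tendsto_fst_weightedBoxes (w : ℕ × ℕ) :
    Tendsto (fun q : ℝ × ℝ × ℝ => q.1) (weightedBoxes w) (𝓝[>] 0) :=
  (tendsto_weightedBoxes.1 tendsto_id).1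

theorem eventually_weightedBoxes (w : ℕ × ℕ) :
    ∀ᶠ q in weightedBoxes w, ‖q.2.1‖ ≤ q.1 ^ w.1 ∧ ‖q.2.2‖ ≤ q.1 ^ w.2 :=
  (tendsto_weightedBoxes.1 tendsto_id).2

theorem tendsto_snd_weightedBoxes (hw : 0 < w.1 ∧ 0 < w.2) :
    Tendsto (fun q : ℝ × ℝ × ℝ => q.2) (weightedBoxes w) (𝓝 0) := by
  have hpow {n : ℕ} (hn : 0 < n) : Tendsto (fun q : ℝ × ℝ × ℝ => q.1 ^ n) (weightedBoxes w) (𝓝 0) :=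
    ((continuous_pow n).tendsto' 0 0 (zero_pow hn.ne')).comp
      ((tendsto_fst_weightedBoxes w).mono_right nhdsWithin_le_nhds)
  rw [Prod.zero_eq_mk, nhds_prod_eq, tendsto_prod_iff']
  exact ⟨squeeze_zero_norm' ((eventually_weightedBoxes w).mono fun _ => And.left) (hpow hw.1),
    squeeze_zero_norm' ((eventually_weightedBoxes w).mono fun _ => And.right) (hpow hw.2)⟩

namespace HasWeightedOrder

theorem zero : HasWeightedOrder w k fun _ => 0 :=
  isBigO_zero _ _

theorem add (hu : HasWeightedOrder w k u) (hv : HasWeightedOrder w k v) :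
    HasWeightedOrder w k fun p => u p + v p :=
  IsBigO.add hu hv

theorem sub (hu : HasWeightedOrder w k u) (hv : HasWeightedOrder w k v) :
    HasWeightedOrder w k fun p => u p - v p :=
  IsBigO.sub hu hv

theorem mul (hu : HasWeightedOrder w k u) (hv : HasWeightedOrder w l v) :
    HasWeightedOrder w (k + l) fun p => u p * v p := by
  simpa only [HasWeightedOrder, pow_add] using IsBigO.mul hu hv

theorem const_mul (c : ℝ) (hu : HasWeightedOrder w k u) :
    HasWeightedOrder w k fun p => c * u p :=
  IsBigO.const_mul_left hu c

theorem pow (hu : HasWeightedOrder w k u) (n : ℕ) :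
    HasWeightedOrder w (k * n) fun p => u p ^ n := by
  simpa only [HasWeightedOrder, pow_mul] using IsBigO.pow hu n

theorem mono (hu : HasWeightedOrder w l u) (hkl : k ≤ l) : HasWeightedOrder w k u := by
  refine IsBigO.trans hu (IsBigO.comp_tendsto ?_
    ((tendsto_fst_weightedBoxes w).mono_right nhdsWithin_le_nhds))
  rcases hkl.eq_or_lt with rfl | hlt
  · exact isBigO_refl _ _
  · exact (isLittleO_pow_pow hlt).isBigO

theorem congr (hw : 0 < w.1 ∧ 0 < w.2) (hu : HasWeightedOrder w k u) (huv : u =ᶠ[𝓝 0] v) :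
    HasWeightedOrder w k v :=
  IsBigO.congr' hu ((tendsto_snd_weightedBoxes hw).eventually huv) .rfl

theorem fst : HasWeightedOrder w w.1 fun p => p.1 :=
  IsBigO.of_bound' ((eventually_weightedBoxes w).mono fun _ hq => hq.1.trans (le_abs_self _))

theorem snd : HasWeightedOrder w w.2 fun p => p.2 :=
  IsBigO.of_bound' ((eventually_weightedBoxes w).mono fun _ hq => hq.2.trans (le_abs_self _))

theorem of_continuousAt (hw : 0 < w.1 ∧ 0 < w.2) (hu : ContinuousAt u 0) :
    HasWeightedOrder w 0 u := by
  simpa only [HasWeightedOrder, pow_zero, Function.comp_def] using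
    (hu.isBigO_one ℝ).comp_tendsto (tendsto_snd_weightedBoxes hw)

theorem of_abs_le (hu : HasWeightedOrder w k u) (huv : ∀ p, |v p| ≤ |u p|) :
    HasWeightedOrder w k v :=
  (IsBigO.of_bound' (Eventually.of_forall fun q : ℝ × ℝ × ℝ => huv q.2)).trans hu

theorem isBigO_comp {α : Type*} {a : Filter α} {σ : α → ℝ} {g : α → ℝ × ℝ}
    (hu : HasWeightedOrder w k u) {R : ℝ} (hR : 0 < R) (hσ : Tendsto σ a (𝓝[>] 0))
    (hg : ∀ᶠ i in a, ‖(g i).1‖ ≤ (R * σ i) ^ w.1 ∧ ‖(g i).2‖ ≤ (R * σ i) ^ w.2) :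
    (fun i => u (g i)) =O[a] fun i => σ i ^ k := by
  have hRσ : Tendsto (fun i => R * σ i) a (𝓝[>] 0) := by
    refine Tendsto.comp (tendsto_nhdsWithin_iff.2 ⟨?_, ?_⟩) hσ
    · exact (Continuous.tendsto' (by fun_prop) 0 0 (by simp)).mono_left nhdsWithin_le_nhds
    · filter_upwards [self_mem_nhdsWithin] with s hs using mul_pos hR hs
  refine (hu.comp_tendsto (tendsto_weightedBoxes.2 ⟨hRσ, hg⟩)).trans ?_
  simpa only [Function.comp_def, mul_pow] using (isBigO_refl _ a).const_mul_left (R ^ k)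

theorem comp {z : ℕ × ℕ} (hz : 0 < z.1 ∧ 0 < z.2) {g h : ℝ × ℝ → ℝ} (hu : HasWeightedOrder z k u)
    (hg : HasWeightedOrder w z.1 g) (hh : HasWeightedOrder w z.2 h) :
    HasWeightedOrder w k fun p => u (g p, h p) := by
  obtain ⟨C, hC⟩ := hg.bound
  obtain ⟨D, hD⟩ := hh.bound
  set R := max 1 (max C D)
  have hR : 1 ≤ R := le_max_left _ _
  refine hu.isBigO_comp (one_pos.trans_le hR) (tendsto_fst_weightedBoxes w) ?_
  filter_upwards [hC, hD, (tendsto_fst_weightedBoxes w).eventually self_mem_nhdsWithin]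
    with q hgq hhq (hq : 0 < q.1)
  have hRpow {n : ℕ} (hn : 0 < n) {c : ℝ} (hc : c ≤ R) : c * ‖q.1 ^ n‖ ≤ (R * q.1) ^ n := by
    rw [Real.norm_of_nonneg (by positivity), mul_pow]
    gcongr
    exact hc.trans (le_self_pow₀ hR hn.ne')
  exact ⟨hgq.trans (hRpow hz.1 ((le_max_left _ _).trans (le_max_right _ _))),
    hhq.trans (hRpow hz.2 ((le_max_right _ _).trans (le_max_right _ _)))⟩

theorem monomial (c : ℝ) (i j : ℕ) :
    HasWeightedOrder w (w.1 * i + w.2 * j) fun p => c * p.1 ^ i * p.2 ^ j :=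
  ((fst.pow i).const_mul c).mul (snd.pow j)

end HasWeightedOrder

/-- Smooth weighted homogeneous functions of degree `k`. -/
def WeightedHomogeneous (w : ℕ × ℕ) (k : ℕ) (F : ℝ × ℝ → ℝ) : Prop :=
  ContDiff ℝ ∞ F ∧ ∀ s x y : ℝ, F (s ^ w.1 * x, s ^ w.2 * y) = s ^ k * F (x, y)

namespace WeightedHomogeneous

variable {F G : ℝ × ℝ → ℝ}

theorem contDiff (hF : WeightedHomogeneous w k F) : ContDiff ℝ ∞ F := hF.1

theorem map_rescale (hF : WeightedHomogeneous w k F) (s x y : ℝ) :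
    F (s ^ w.1 * x, s ^ w.2 * y) = s ^ k * F (x, y) :=
  hF.2 s x y

theorem zero : WeightedHomogeneous w k fun _ => 0 :=
  ⟨contDiff_const, fun _ _ _ => (mul_zero _).symm⟩

theorem add (hF : WeightedHomogeneous w k F) (hG : WeightedHomogeneous w k G) :
    WeightedHomogeneous w k fun p => F p + G p :=
  ⟨hF.contDiff.add hG.contDiff, fun s x y => by simp only [hF.map_rescale, hG.map_rescale, mul_add]⟩

theorem const_mul (c : ℝ) (hF : WeightedHomogeneous w k F) :
    WeightedHomogeneous w k fun p => c * F p :=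
  ⟨contDiff_const.mul hF.contDiff, fun s x y => by simp only [hF.map_rescale, mul_left_comm]⟩

theorem sum {ι : Type*} {S : Finset ι} {U : ι → ℝ × ℝ → ℝ}
    (hU : ∀ i ∈ S, WeightedHomogeneous w k (U i)) :
    WeightedHomogeneous w k fun p => ∑ i ∈ S, U i p := by
  refine ⟨ContDiff.sum fun i hi => (hU i hi).contDiff, fun s x y => ?_⟩
  rw [Finset.mul_sum]
  exact Finset.sum_congr rfl fun i hi => (hU i hi).map_rescale s x y

theorem monomial (c : ℝ) {i j : ℕ} (hk : w.1 * i + w.2 * j = k) :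
    WeightedHomogeneous w k fun p => c * p.1 ^ i * p.2 ^ j := by
  refine ⟨by fun_prop, fun s x y => ?_⟩
  rw [← hk, pow_add, pow_mul, pow_mul]
  ring

theorem exists_abs_le (hF : WeightedHomogeneous w k F) : ∃ M, 0 ≤ M ∧ ∀ s > 0, ∀ x y : ℝ,
    |x| ≤ s ^ w.1 → |y| ≤ s ^ w.2 → |F (x, y)| ≤ M * s ^ k := by
  obtain ⟨M, hM⟩ := (isCompact_closedBall (0 : ℝ × ℝ) 1).exists_bound_of_continuousOn
    hF.contDiff.continuous.continuousOn
  refine ⟨M, (norm_nonneg _).trans (hM 0 (by simp)), fun s hs x y hx hy => ?_⟩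
  have hscaled {n : ℕ} {z : ℝ} (hz : |z| ≤ s ^ n) : ‖z / s ^ n‖ ≤ 1 := by
    rw [norm_div, Real.norm_of_nonneg (by positivity : 0 ≤ s ^ n)]
    exact div_le_one_of_le₀ hz (by positivity)
  have hmem : (x / s ^ w.1, y / s ^ w.2) ∈ Metric.closedBall (0 : ℝ × ℝ) 1 := by
    rw [mem_closedBall_zero_iff, Prod.norm_mk]
    exact max_le (hscaled hx) (hscaled hy)
  have hF' := hF.map_rescale s (x / s ^ w.1) (y / s ^ w.2)
  rw [mul_div_cancel₀ _ (by positivity), mul_div_cancel₀ _ (by positivity)] at hF'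
  rw [hF', abs_mul, abs_of_pos (by positivity), mul_comm]
  gcongr
  exact hM _ hmem

theorem hasWeightedOrder (hF : WeightedHomogeneous w k F) : HasWeightedOrder w k F := by
  obtain ⟨M, -, hM⟩ := hF.exists_abs_le
  refine IsBigO.of_bound M ?_
  filter_upwards [eventually_weightedBoxes w,
    (tendsto_fst_weightedBoxes w).eventually self_mem_nhdsWithin] with q hq (hs : 0 < q.1)
  simpa [abs_of_pos hs] using hM q.1 hs q.2.1 q.2.2 hq.1 hq.2

end WeightedHomogeneous

theorem eq_zero_of_isBigO_sum_mul_pow {c : ℕ → ℝ} {K : ℕ}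
    (hc : (fun s : ℝ => ∑ m ∈ Finset.range K, c m * s ^ m) =O[𝓝[>] 0] fun s => s ^ K) :
    ∀ m < K, c m = 0 := by
  intro m
  induction m using Nat.strong_induction_on with | _ m ih
  intro hm
  have hpow {n : ℕ} (hn : m < n) : (fun s : ℝ => s ^ n) =o[𝓝[>] 0] fun s => s ^ m :=
    (isLittleO_pow_pow hn).mono nhdsWithin_le_nhds
  have hhigh : (fun s : ℝ => ∑ n ∈ Finset.Ico (m + 1) K, c n * s ^ n) =o[𝓝[>] 0] fun s => s ^ m :=
    IsLittleO.fun_sum fun n hn => (hpow (Finset.mem_Ico.1 hn).1).const_mul_left (c n)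
  have hlow (s : ℝ) : ∑ n ∈ Finset.Ico 0 m, c n * s ^ n = 0 :=
    Finset.sum_eq_zero fun n hn => by
      rw [ih n (Finset.mem_Ico.1 hn).2 ((Finset.mem_Ico.1 hn).2.trans hm), zero_mul]
  have hsplit (s : ℝ) : ∑ n ∈ Finset.range K, c n * s ^ n -
      ∑ n ∈ Finset.Ico (m + 1) K, c n * s ^ n = c m * s ^ m := by
    rw [Finset.range_eq_Ico, ← Finset.sum_Ico_consecutive _ m.zero_le hm.le, hlow,
      Finset.sum_eq_sum_Ico_succ_bot hm]
    ring
  have hlim := ((hc.trans_isLittleO (hpow hm)).sub hhigh).tendsto_div_nhds_zero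
  refine tendsto_nhds_unique (tendsto_const_nhds.congr' ?_) hlim
  filter_upwards [self_mem_nhdsWithin] with s (hs : 0 < s)
  rw [hsplit, mul_div_cancel_right₀ _ (by positivity)]

theorem WeightedHomogeneous.eq_zero_of_hasWeightedOrder_sum (hw : 0 < w.1 ∧ 0 < w.2)
    {F : ℕ → ℝ × ℝ → ℝ} {K : ℕ} (hF : ∀ m, WeightedHomogeneous w m (F m))
    (hsum : HasWeightedOrder w K fun p => ∑ m ∈ Finset.range K, F m p) {m : ℕ} (hm : m < K)
    (p : ℝ × ℝ) : F m p = 0 := by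
  set R := max 1 ‖p‖
  have hR : 1 ≤ R := le_max_left _ _
  have hbox {n : ℕ} (hn : 0 < n) {z : ℝ} (hz : ‖z‖ ≤ ‖p‖) {s : ℝ} (hs : 0 < s) :
      ‖s ^ n * z‖ ≤ (R * s) ^ n := by
    rw [norm_mul, Real.norm_of_nonneg (by positivity), mul_pow, mul_comm]
    gcongr
    exact (hz.trans (le_max_right _ _)).trans (le_self_pow₀ hR hn.ne')
  have hO := hsum.isBigO_comp (g := fun s => (s ^ w.1 * p.1, s ^ w.2 * p.2))
    (one_pos.trans_le hR) tendsto_id (by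
      filter_upwards [self_mem_nhdsWithin] with s hs using
        ⟨hbox hw.1 (norm_fst_le p) hs, hbox hw.2 (norm_snd_le p) hs⟩)
  refine eq_zero_of_isBigO_sum_mul_pow (c := fun m => F m p) (hO.congr_left fun s => ?_) m hm
  exact Finset.sum_congr rfl fun m _ => ((hF m).map_rescale s p.1 p.2).trans (mul_comm _ _)

end WeightedOrder

/-! ### Taylor coefficients and weighted order -/

section Taylor

variable {u v : ℝ × ℝ → ℝ}

theorem contDiff_iterate_dop (hu : ContDiff ℝ ∞ u) (e : ℝ × ℝ) (n : ℕ) :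
    ContDiff ℝ ∞ ((dop e)^[n] u) := by
  induction n with
  | zero => exact hu
  | succ n ih =>
    rw [Function.iterate_succ_apply']
    exact contDiff_fderiv_apply ih e

theorem iterate_dop_sub (hu : ContDiff ℝ ∞ u) (hv : ContDiff ℝ ∞ v) (e : ℝ × ℝ) (n : ℕ) :
    (dop e)^[n] (fun p => u p - v p) = fun p => (dop e)^[n] u p - (dop e)^[n] v p := by
  induction n with
  | zero => rfl
  | succ n ih =>
    simp only [Function.iterate_succ_apply', ih]
    funext p
    simp only [dop]
    rw [fderiv_fun_sub ((contDiff_iterate_dop hu e n).differentiable (by simp) p)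
      ((contDiff_iterate_dop hv e n).differentiable (by simp) p), sub_apply]

theorem iterate_dop_sum {ι : Type*} {S : Finset ι} {U : ι → ℝ × ℝ → ℝ}
    (hU : ∀ i ∈ S, ContDiff ℝ ∞ (U i)) (e : ℝ × ℝ) (n : ℕ) :
    (dop e)^[n] (fun p => ∑ i ∈ S, U i p) = fun p => ∑ i ∈ S, (dop e)^[n] (U i) p := by
  induction n with
  | zero => rfl
  | succ n ih =>
    simp only [Function.iterate_succ_apply', ih]
    funext p
    simp only [dop]
    rw [fderiv_fun_sum fun i hi => (contDiff_iterate_dop (hU i hi) e n).differentiable (by simp) p,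
      sum_apply]

theorem dop_comm (hu : ContDiff ℝ ∞ u) (d e : ℝ × ℝ) : dop d (dop e u) = dop e (dop d u) := by
  have hdiff : Differentiable ℝ (fderiv ℝ u) :=
    (hu.fderiv_right (m := ∞) (by simp)).differentiable (by simp)
  have hsnd (d e p : ℝ × ℝ) : dop d (dop e u) p = fderiv ℝ (fderiv ℝ u) p d e :=
    congrArg (· d) ((hdiff p).hasFDerivAt.clm_apply (hasFDerivAt_const e p)).fderiv |>.trans
      (by simp)
  funext p
  have hmin : minSmoothness ℝ 2 ≤ (∞ : WithTop ℕ∞) := by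
    rw [minSmoothness_of_isRCLikeNormedField]; decide
  rw [hsnd, hsnd, (hu.contDiffAt.isSymmSndFDerivAt hmin).eq]

theorem iterate_dop_dop (hu : ContDiff ℝ ∞ u) (d e : ℝ × ℝ) (n : ℕ) :
    (dop d)^[n] (dop e u) = dop e ((dop d)^[n] u) := by
  induction n with
  | zero => rfl
  | succ n ih =>
    rw [Function.iterate_succ_apply', ih, dop_comm (contDiff_iterate_dop hu d n),
      Function.iterate_succ_apply']

theorem tcoeff_sub (hu : ContDiff ℝ ∞ u) (hv : ContDiff ℝ ∞ v) (i j : ℕ) :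
    tcoeff (fun p => u p - v p) i j = tcoeff u i j - tcoeff v i j := by
  simp only [tcoeff, pdx, pdy, iterate_dop_sub hu hv, sub_div,
    iterate_dop_sub (contDiff_iterate_dop hu _ j) (contDiff_iterate_dop hv _ j)]

theorem tcoeff_sum {ι : Type*} {S : Finset ι} {U : ι → ℝ × ℝ → ℝ}
    (hU : ∀ i ∈ S, ContDiff ℝ ∞ (U i)) (i j : ℕ) :
    tcoeff (fun p => ∑ a ∈ S, U a p) i j = ∑ a ∈ S, tcoeff (U a) i j := by
  simp only [tcoeff, pdx, pdy, iterate_dop_sum hU, Finset.sum_div,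
    iterate_dop_sum fun a ha => contDiff_iterate_dop (hU a ha) _ j]

theorem tcoeff_zero_zero (u : ℝ × ℝ → ℝ) : tcoeff u 0 0 = u 0 := by simp [tcoeff]

theorem tcoeff_pdy (u : ℝ × ℝ → ℝ) (i j : ℕ) :
    tcoeff (pdy u) i j = (j + 1) * tcoeff u i (j + 1) := by
  simp only [tcoeff, ← Function.iterate_succ_apply, Nat.factorial_succ, Nat.cast_mul,
    Nat.cast_succ]
  field_simp

theorem tcoeff_pdx (hu : ContDiff ℝ ∞ u) (i j : ℕ) :
    tcoeff (pdx u) i j = (i + 1) * tcoeff u (i + 1) j := by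
  simp only [tcoeff, pdx, pdy, iterate_dop_dop hu, ← Function.iterate_succ_apply,
    Nat.factorial_succ, Nat.cast_mul, Nat.cast_succ]
  field_simp

theorem contDiff_pdx (hu : ContDiff ℝ ∞ u) : ContDiff ℝ ∞ (pdx u) :=
  contDiff_fderiv_apply hu _

theorem hasDerivAt_pdx (hu : ContDiff ℝ ∞ u) (x y : ℝ) :
    HasDerivAt (fun x => u (x, y)) (pdx u (x, y)) x :=
  HasFDerivAt.comp_hasDerivAt (f := fun x => (x, y)) x
    (hu.differentiable (by simp) (x, y)).hasFDerivAt
    ((hasDerivAt_id x).prodMk (hasDerivAt_const x y))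

theorem iterate_pdx_monomial (c : ℝ) (a b n : ℕ) :
    pdx^[n] (fun p => c * p.1 ^ a * p.2 ^ b) =
      fun p => c * a.descFactorial n * p.1 ^ (a - n) * p.2 ^ b := by
  induction n with
  | zero => simp
  | succ n ih =>
    rw [Function.iterate_succ_apply', ih]
    funext ⟨x, y⟩
    refine (hasDerivAt_pdx (by fun_prop) x y).unique ?_
    dsimp only
    refine (((hasDerivAt_pow (a - n) x).const_mul _).mul_const _).congr_deriv ?_
    rw [Nat.descFactorial_succ, Nat.sub_sub]
    push_cast
    ring

theorem iterate_pdy_monomial (c : ℝ) (a b n : ℕ) :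
    pdy^[n] (fun p => c * p.1 ^ a * p.2 ^ b) =
      fun p => c * b.descFactorial n * p.1 ^ a * p.2 ^ (b - n) := by
  induction n with
  | zero => simp
  | succ n ih =>
    rw [Function.iterate_succ_apply', ih]
    funext ⟨x, y⟩
    refine (hasDerivAt_pdy (by fun_prop) x y).unique ?_
    dsimp only
    refine ((hasDerivAt_pow (b - n) y).const_mul _).congr_deriv ?_
    rw [Nat.descFactorial_succ, Nat.sub_sub]
    push_cast
    ring

theorem tcoeff_monomial (c : ℝ) (a : ℕ × ℕ) (i j : ℕ) :
    tcoeff (fun p => c * p.1 ^ a.1 * p.2 ^ a.2) i j = if a = (i, j) then c else 0 := by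
  obtain ⟨a, b⟩ := a
  have hvanish {m n : ℕ} (hmn : m ≠ n) : (m.descFactorial n : ℝ) * 0 ^ (m - n) = 0 := by
    rcases hmn.lt_or_gt with h | h
    · rw [Nat.descFactorial_of_lt h, Nat.cast_zero, zero_mul]
    · rw [zero_pow (Nat.sub_ne_zero_of_lt h), mul_zero]
  rw [tcoeff, iterate_pdy_monomial, iterate_pdx_monomial]
  simp only [Prod.fst_zero, Prod.snd_zero]
  split_ifs with h
  · obtain ⟨rfl, rfl⟩ := Prod.mk.injEq .. ▸ h
    simp only [Nat.descFactorial_self, tsub_self, pow_zero]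
    field_simp
  · have hij : a ≠ i ∨ b ≠ j := by
      contrapose! h
      exact Prod.ext h.1 h.2
    rcases hij with h | h
    · linear_combination (c * b.descFactorial j * 0 ^ (b - j) / (i.factorial * j.factorial)) *
        hvanish h
    · linear_combination (c * a.descFactorial i * 0 ^ (a - i) / (i.factorial * j.factorial)) *
        hvanish h

theorem contDiff_taylorSum (c : ℕ × ℕ → ℝ) (S : Finset (ℕ × ℕ)) :
    ContDiff ℝ ∞ fun p : ℝ × ℝ => ∑ a ∈ S, c a * p.1 ^ a.1 * p.2 ^ a.2 := by
  fun_prop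

theorem tcoeff_sum_monomial (c : ℕ × ℕ → ℝ) (S : Finset (ℕ × ℕ)) (i j : ℕ) :
    tcoeff (fun p => ∑ a ∈ S, c a * p.1 ^ a.1 * p.2 ^ a.2) i j =
      if (i, j) ∈ S then c (i, j) else 0 := by
  rw [tcoeff_sum fun a _ => by fun_prop]
  simp only [tcoeff_monomial, Finset.sum_ite_eq']

theorem dop_apply (u : ℝ × ℝ → ℝ) (e p : ℝ × ℝ) : dop e u p = e.1 * pdx u p + e.2 * pdy u p := by
  have he : e = e.1 • ((1, 0) : ℝ × ℝ) + e.2 • ((0, 1) : ℝ × ℝ) := by simp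
  nth_rw 1 [dop, he, map_add, map_smul, map_smul]
  rfl

theorem exists_dop_eq (hu : ContDiff ℝ ∞ u) (e p : ℝ × ℝ) (t : ℝ) :
    ∃ θ, |θ| ≤ |t| ∧ u (p + t • e) - u p = t * dop e u (p + θ • e) := by
  have hd := hasDerivAt_apply_add_smul (hu.differentiable (by simp)) p e t
  obtain ⟨τ, hτ, hslope⟩ := exists_hasDerivAt_eq_slope _ _ one_pos
    (fun τ _ => (hd τ).continuousAt.continuousWithinAt) fun τ _ => hd τ
  refine ⟨τ * t, ?_, ?_⟩
  · rw [abs_mul]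
    exact mul_le_of_le_one_left (abs_nonneg t) (abs_le.2 ⟨by linarith [hτ.1], hτ.2.le⟩)
  · simpa [dop] using hslope.symm

variable {w : ℕ × ℕ} {k l : ℕ}

theorem HasWeightedOrder.comp_fst_zero (hw : 0 < w.1 ∧ 0 < w.2) (hu : ContDiff ℝ ∞ u)
    (hvanish : ∀ i, w.1 * i < k → pdx^[i] u 0 = 0) :
    HasWeightedOrder w k fun p => u (p.1, 0) := by
  induction k using Nat.strong_induction_on generalizing u with | _ k ih
  rcases k.eq_zero_or_pos with rfl | hk
  · exact .of_continuousAt hw (hu.continuous.comp (by fun_prop)).continuousAt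
  have hpdx : HasWeightedOrder w (k - w.1) fun p => pdx u (p.1, 0) :=
    ih _ (Nat.sub_lt hk hw.1) (contDiff_pdx hu) fun i hi =>
      (Function.iterate_succ_apply pdx i u).symm ▸ hvanish (i + 1) (by rw [mul_add]; omega)
  choose ξ hξ hmean using fun p : ℝ × ℝ => exists_dop_eq hu (1, 0) 0 p.1
  have hcomp := hpdx.comp hw (HasWeightedOrder.fst.of_abs_le hξ) .snd
  refine ((HasWeightedOrder.fst.mul hcomp).mono (by omega : k ≤ w.1 + (k - w.1))).congr hw ?_
  have hu0 : u 0 = 0 := hvanish 0 (by simpa using hk)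
  exact .of_forall fun p => by simpa [hu0, pdx] using (hmean p).symm

theorem HasWeightedOrder.of_tcoeff_eq_zero (hw : 0 < w.1 ∧ 0 < w.2) (hu : ContDiff ℝ ∞ u)
    (hvanish : ∀ i j, w.1 * i + w.2 * j < k → tcoeff u i j = 0) : HasWeightedOrder w k u := by
  induction k using Nat.strong_induction_on generalizing u with | _ k ih
  rcases k.eq_zero_or_pos with rfl | hk
  · exact .of_continuousAt hw hu.continuous.continuousAt
  have hpdy : HasWeightedOrder w (k - w.2) (pdy u) :=
    ih _ (Nat.sub_lt hk hw.2) (contDiff_pdy hu) fun i j hij => by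
      rw [tcoeff_pdy, hvanish i (j + 1) (by rw [mul_add]; omega), mul_zero]
  have haxis : HasWeightedOrder w k fun p => u (p.1, 0) :=
    .comp_fst_zero hw hu fun i hi => by
      simpa [tcoeff, Nat.factorial_ne_zero] using hvanish i 0 (by simpa using hi)
  choose ξ hξ hmean using fun p : ℝ × ℝ => exists_dop_eq hu (0, 1) (p.1, 0) p.2
  have hcomp := hpdy.comp hw .fst (HasWeightedOrder.snd.of_abs_le hξ)
  refine (haxis.add ((HasWeightedOrder.snd.mul hcomp).mono
    (by omega : k ≤ w.2 + (k - w.2)))).congr hw (.of_forall fun p => ?_)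
  have := hmean p
  simp only [Prod.smul_mk, smul_eq_mul, mul_zero, mul_one, Prod.mk_add_mk, add_zero,
    zero_add] at this
  exact (add_comm _ _).trans (sub_eq_iff_eq_add.1 this).symm

theorem HasWeightedOrder.sub_taylorSum (hw : 0 < w.1 ∧ 0 < w.2) (hu : ContDiff ℝ ∞ u)
    {S : Finset (ℕ × ℕ)} (hS : ∀ i j, w.1 * i + w.2 * j < k → (i, j) ∈ S) :
    HasWeightedOrder w k fun p => u p - ∑ a ∈ S, tcoeff u a.1 a.2 * p.1 ^ a.1 * p.2 ^ a.2 :=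
  .of_tcoeff_eq_zero hw (hu.sub (contDiff_taylorSum _ S)) fun i j hij => by
    rw [tcoeff_sub hu (contDiff_taylorSum _ S),
      tcoeff_sum_monomial (fun a => tcoeff u a.1 a.2), if_pos (hS i j hij), sub_self]

/-- The exponents of the monomials of weighted degree `m`. -/
def weightedExponents (w : ℕ × ℕ) (m : ℕ) : Finset (ℕ × ℕ) :=
  {a ∈ Finset.range (m + 1) ×ˢ Finset.range (m + 1) | w.1 * a.1 + w.2 * a.2 = m}

theorem mem_weightedExponents (hw : 0 < w.1 ∧ 0 < w.2) {m : ℕ} {a : ℕ × ℕ} :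
    a ∈ weightedExponents w m ↔ w.1 * a.1 + w.2 * a.2 = m := by
  simp only [weightedExponents, Finset.mem_filter, Finset.mem_product, Finset.mem_range,
    and_iff_right_iff_imp]
  rintro rfl
  exact ⟨by nlinarith, by nlinarith⟩

/-- The part of weighted degree `m` of the Taylor series of `u` at the origin. -/
def weightedPart (w : ℕ × ℕ) (m : ℕ) (u : ℝ × ℝ → ℝ) (p : ℝ × ℝ) : ℝ :=
  ∑ a ∈ weightedExponents w m, tcoeff u a.1 a.2 * p.1 ^ a.1 * p.2 ^ a.2

theorem weightedHomogeneous_weightedPart (hw : 0 < w.1 ∧ 0 < w.2) (m : ℕ) (u : ℝ × ℝ → ℝ) :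
    WeightedHomogeneous w m (weightedPart w m u) :=
  .sum fun _ ha => .monomial _ ((mem_weightedExponents hw).1 ha)

theorem HasWeightedOrder.sub_sum_weightedPart (hw : 0 < w.1 ∧ 0 < w.2) (hu : ContDiff ℝ ∞ u)
    (k : ℕ) :
    HasWeightedOrder w k fun p => u p - ∑ m ∈ Finset.range k, weightedPart w m u p := by
  have hdisj : Set.PairwiseDisjoint (Finset.range k : Set ℕ) (weightedExponents w) :=
    fun m _ n _ hmn => Finset.disjoint_left.2 fun a hm hn => hmn <| by
      rw [← (mem_weightedExponents hw).1 hm, ← (mem_weightedExponents hw).1 hn]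
  simp only [weightedPart, ← Finset.sum_biUnion hdisj]
  exact .sub_taylorSum hw hu fun i j hij => Finset.mem_biUnion.2
    ⟨_, Finset.mem_range.2 hij, (mem_weightedExponents hw).2 rfl⟩

theorem HasWeightedOrder.tcoeff_eq_zero (hw : 0 < w.1 ∧ 0 < w.2) (hu : ContDiff ℝ ∞ u)
    (huk : HasWeightedOrder w k u) {i j : ℕ} (hij : w.1 * i + w.2 * j < k) : tcoeff u i j = 0 := by
  have hsum : HasWeightedOrder w k fun p => ∑ m ∈ Finset.range k, weightedPart w m u p :=
    (huk.sub (sub_sum_weightedPart hw hu k)).congr hw (.of_forall fun p => sub_sub_cancel _ _)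
  have hzero : weightedPart w (w.1 * i + w.2 * j) u = fun _ => 0 :=
    funext fun p => WeightedHomogeneous.eq_zero_of_hasWeightedOrder_sum hw
      (fun m => weightedHomogeneous_weightedPart hw m u) hsum hij p
  have hcoeff := tcoeff_sum_monomial (fun a => tcoeff u a.1 a.2)
    (weightedExponents w (w.1 * i + w.2 * j)) i j
  have hmem : (i, j) ∈ weightedExponents w (w.1 * i + w.2 * j) := (mem_weightedExponents hw).2 rfl
  rw [if_pos hmem] at hcoeff
  rw [← hcoeff]
  refine (congrArg (tcoeff · i j) hzero).trans ?_
  simpa using tcoeff_sum_monomial 0 ∅ i j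

theorem HasWeightedOrder.sub_weightedPart (hw : 0 < w.1 ∧ 0 < w.2) (hu : ContDiff ℝ ∞ u)
    (huk : HasWeightedOrder w k u) :
    HasWeightedOrder w (k + 1) fun p => u p - weightedPart w k u p := by
  refine (sub_sum_weightedPart hw hu (k + 1)).congr hw (.of_forall fun p => ?_)
  dsimp only
  rw [Finset.sum_range_succ, Finset.sum_eq_zero, zero_add]
  refine fun m hm => Finset.sum_eq_zero fun a ha => ?_
  rw [huk.tcoeff_eq_zero hw hu
    (((mem_weightedExponents hw).1 ha).trans_lt (Finset.mem_range.1 hm)), zero_mul, zero_mul]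

theorem hasWeightedOrder_pdx (hw : 0 < w.1 ∧ 0 < w.2) (hu : ContDiff ℝ ∞ u)
    (huk : HasWeightedOrder w k u) : HasWeightedOrder w (k - w.1) (pdx u) :=
  .of_tcoeff_eq_zero hw (contDiff_pdx hu) fun i j hij => by
    rw [tcoeff_pdx hu, huk.tcoeff_eq_zero hw hu (by rw [mul_add]; omega), mul_zero]

theorem hasWeightedOrder_pdy (hw : 0 < w.1 ∧ 0 < w.2) (hu : ContDiff ℝ ∞ u)
    (huk : HasWeightedOrder w k u) : HasWeightedOrder w (k - w.2) (pdy u) :=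
  .of_tcoeff_eq_zero hw (contDiff_pdy hu) fun i j hij => by
    rw [tcoeff_pdy, huk.tcoeff_eq_zero hw hu (by rw [mul_add]; omega), mul_zero]

theorem exists_apply_add_sub_eq (hu : ContDiff ℝ ∞ u) (f h a b : ℝ × ℝ → ℝ) :
    ∃ ξ η : ℝ × ℝ → ℝ, (∀ p, |ξ p| ≤ |a p|) ∧ (∀ p, |η p| ≤ |b p|) ∧
      ∀ p, u (f p + a p, h p + b p) - u (f p, h p) =
        a p * pdx u (f p + ξ p, h p + η p) + b p * pdy u (f p + ξ p, h p + η p) := by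
  choose θ hθ hmean using fun p => exists_dop_eq hu (a p, b p) (f p, h p) 1
  have hle (c : ℝ × ℝ → ℝ) (p : ℝ × ℝ) : |θ p * c p| ≤ |c p| := by
    rw [abs_mul]
    exact mul_le_of_le_one_left (abs_nonneg _) ((hθ p).trans_eq abs_one)
  exact ⟨fun p => θ p * a p, fun p => θ p * b p, hle a, hle b, fun p => by
    simpa [dop_apply] using hmean p⟩

theorem HasWeightedOrder.comp_add_sub_comp {z : ℕ × ℕ} (hz : 0 < z.1 ∧ 0 < z.2)
    (hu : ContDiff ℝ ∞ u) (huk : HasWeightedOrder z k u) {f h a b : ℝ × ℝ → ℝ}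
    (hf : HasWeightedOrder w z.1 f) (hh : HasWeightedOrder w z.2 h)
    (ha : HasWeightedOrder w (z.1 + l) a) (hb : HasWeightedOrder w (z.2 + l) b) :
    HasWeightedOrder w (k + l) fun p => u (f p + a p, h p + b p) - u (f p, h p) := by
  obtain ⟨ξ, η, hξ, hη, hmean⟩ := exists_apply_add_sub_eq hu f h a b
  have hfξ := hf.add ((ha.of_abs_le hξ).mono (Nat.le_add_right _ _))
  have hhη := hh.add ((hb.of_abs_le hη).mono (Nat.le_add_right _ _))
  have hx := ha.mul ((hasWeightedOrder_pdx hz hu huk).comp hz hfξ hhη)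
  have hy := hb.mul ((hasWeightedOrder_pdy hz hu huk).comp hz hfξ hhη)
  simp only [hmean]
  exact (hx.mono (by omega)).add (hy.mono (by omega))

theorem HasWeightedOrder.comp_add_sub_comp_sub_linear (hw : 0 < w.1 ∧ 0 < w.2)
    (hu : ContDiff ℝ ∞ u) (huk : HasWeightedOrder w k u) {f h a b : ℝ × ℝ → ℝ}
    (hf : HasWeightedOrder w (w.1 + 1) fun p => f p - p.1)
    (hh : HasWeightedOrder w (w.2 + 1) fun p => h p - p.2)
    (ha : HasWeightedOrder w (w.1 + (l + 1)) a) (hb : HasWeightedOrder w (w.2 + (l + 1)) b) :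
    HasWeightedOrder w (k + l + 2) fun p => u (f p + a p, h p + b p) - u (f p, h p) -
      (a p * pdx u p + b p * pdy u p) := by
  obtain ⟨ξ, η, hξ, hη, hmean⟩ := exists_apply_add_sub_eq hu f h a b
  have hfξ := hf.add ((ha.of_abs_le hξ).mono (by omega))
  have hhη := hh.add ((hb.of_abs_le hη).mono (by omega))
  have hx := ha.mul (comp_add_sub_comp hw (contDiff_pdx hu) (hasWeightedOrder_pdx hw hu huk)
    .fst .snd hfξ hhη)
  have hy := hb.mul (comp_add_sub_comp hw (contDiff_pdy hu) (hasWeightedOrder_pdy hw hu huk)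
    .fst .snd hfξ hhη)
  refine ((hx.mono (by omega : k + l + 2 ≤ _)).add (hy.mono (by omega))).congr hw
    (.of_forall fun p => ?_)
  simp only [hmean, ← add_assoc, add_sub_cancel]
  ring

theorem HasWeightedOrder.isFlat (hw : 0 < w.1 ∧ 0 < w.2) (hu : ContDiff ℝ ∞ u)
    (huk : ∀ k, HasWeightedOrder w k u) : IsFlat u := by
  refine ⟨hu, fun n => ?_⟩
  have hone : HasWeightedOrder (1, 1) n u :=
    .of_tcoeff_eq_zero (by simp) hu fun i j _ => (huk _).tcoeff_eq_zero hw hu (Nat.lt_succ_self _)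
  have hu0 : u 0 = 0 :=
    (tcoeff_zero_zero u).symm.trans ((huk 1).tcoeff_eq_zero hw hu (by simp))
  have hne : u =O[𝓝[≠] 0] fun p => ‖p‖ ^ n :=
    hone.isBigO_comp one_pos tendsto_norm_nhdsNE_zero (.of_forall fun p => by
      simpa using ⟨norm_fst_le p, norm_snd_le p⟩)
  rw [← pure_sup_nhdsNE]
  exact (isBigO_pure.2 fun _ => hu0).sup hne

end Taylor

/-! ### Borel's lemma for weighted homogeneous series -/

section Borel

variable {w : ℕ × ℕ} {m : ℕ} {F : ℝ × ℝ → ℝ}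

/-- The weighted dilation `(x, y) ↦ (s ^ w.1 * x, s ^ w.2 * y)`, as a linear map. -/
def weightedDilation (w : ℕ × ℕ) (s : ℝ) : ℝ × ℝ →L[ℝ] ℝ × ℝ :=
  (s ^ w.1 • ContinuousLinearMap.fst ℝ ℝ ℝ).prod (s ^ w.2 • ContinuousLinearMap.snd ℝ ℝ ℝ)

theorem weightedDilation_apply (w : ℕ × ℕ) (s : ℝ) (p : ℝ × ℝ) :
    weightedDilation w s p = (s ^ w.1 * p.1, s ^ w.2 * p.2) := by
  simp [weightedDilation]

theorem norm_weightedDilation_le (w : ℕ × ℕ) {s : ℝ} (hs : 1 ≤ s) :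
    ‖weightedDilation w s‖ ≤ s ^ (w.1 + w.2) := by
  refine ContinuousLinearMap.opNorm_le_bound _ (by positivity) fun p => ?_
  have hcoord {n : ℕ} (hn : n ≤ w.1 + w.2) {z : ℝ} (hz : ‖z‖ ≤ ‖p‖) :
      ‖s ^ n * z‖ ≤ s ^ (w.1 + w.2) * ‖p‖ := by
    rw [norm_mul, Real.norm_of_nonneg (by positivity)]
    gcongr
  rw [weightedDilation_apply, Prod.norm_mk]
  exact max_le (hcoord (by omega) (norm_fst_le p)) (hcoord (by omega) (norm_snd_le p))

theorem norm_iteratedFDeriv_comp_weightedDilation_le {H : ℝ × ℝ → ℝ} (hH : ContDiff ℝ ∞ H)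
    {j : ℕ} {B : ℝ} (hB : ∀ p, ‖iteratedFDeriv ℝ j H p‖ ≤ B) {s : ℝ} (hs : 1 ≤ s) (p : ℝ × ℝ) :
    ‖iteratedFDeriv ℝ j (H ∘ weightedDilation w s) p‖ ≤ B * s ^ ((w.1 + w.2) * j) := by
  rw [(weightedDilation w s).iteratedFDeriv_comp_right hH p (by exact_mod_cast le_top), pow_mul]
  refine (ContinuousMultilinearMap.norm_compContinuousLinearMap_le _ _).trans ?_
  rw [Finset.prod_const, Finset.card_univ, Fintype.card_fin]
  gcongr
  · exact (norm_nonneg _).trans (hB p)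
  · exact hB _
  · exact norm_weightedDilation_le w hs

theorem WeightedHomogeneous.mul_comp_weightedDilation {k : ℕ} (hF : WeightedHomogeneous w k F)
    (χ : ℝ × ℝ → ℝ) {s : ℝ} (hs : 0 < s) :
    (fun p => F p * χ (weightedDilation w s p)) =
      (s⁻¹ ^ k) • ((fun p => F p * χ p) ∘ weightedDilation w s) := by
  funext p
  simp only [Pi.smul_apply, Function.comp_apply, smul_eq_mul, weightedDilation_apply,
    hF.map_rescale, inv_pow]
  field_simp

theorem WeightedHomogeneous.abs_mul_comp_weightedDilation_le (χ : ContDiffBump (0 : ℝ × ℝ))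
    (hχ : χ.rOut ≤ 1) {M : ℝ} (hM : 0 ≤ M)
    (hF : ∀ s > 0, ∀ x y : ℝ, |x| ≤ s ^ w.1 → |y| ≤ s ^ w.2 → |F (x, y)| ≤ M * s ^ (m + 1))
    {r s : ℝ} (hr : 0 < r) (hs : 0 < s) {p : ℝ × ℝ} (hx : |p.1| ≤ s ^ w.1) (hy : |p.2| ≤ s ^ w.2) :
    |F p * χ (weightedDilation w r p)| ≤ M / r * s ^ m := by
  rcases eq_or_ne (χ (weightedDilation w r p)) 0 with h | h
  · rw [h, mul_zero, abs_zero]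
    positivity
  have hnorm : ‖(r ^ w.1 * p.1, r ^ w.2 * p.2)‖ ≤ 1 := by
    rw [← weightedDilation_apply, ← mem_closedBall_zero_iff]
    exact Metric.closedBall_subset_closedBall hχ
      (Metric.ball_subset_closedBall (χ.support_eq ▸ h))
  have hmin {n : ℕ} {z : ℝ} (hz : |z| ≤ s ^ n) (hrz : ‖r ^ n * z‖ ≤ 1) : |z| ≤ min s r⁻¹ ^ n := by
    rcases min_choice s r⁻¹ with h | h <;> rw [h]
    · exact hz
    · rw [norm_mul, Real.norm_of_nonneg (by positivity)] at hrz
      rwa [inv_pow, ← one_div, le_div_iff₀' (by positivity)]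
  have ht : 0 < min s r⁻¹ := lt_min hs (inv_pos.2 hr)
  calc |F p * χ (weightedDilation w r p)| ≤ |F p| * 1 := by
        rw [abs_mul, abs_of_nonneg χ.nonneg]
        gcongr
        exact χ.le_one
    _ ≤ M * (min s r⁻¹ ^ m * min s r⁻¹) := by
        rw [mul_one, ← pow_succ]
        exact hF _ ht p.1 p.2 (hmin hx ((norm_fst_le _).trans hnorm))
          (hmin hy ((norm_snd_le _).trans hnorm))
    _ ≤ M * (s ^ m * r⁻¹) := by
        gcongr
        · exact min_le_left _ _
        · exact min_le_right _ _
    _ = M / r * s ^ m := by ring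

theorem WeightedHomogeneous.exists_eventuallyEq_small (hw : 0 < w.1 ∧ 0 < w.2)
    (hF : WeightedHomogeneous w (m + 1) F) {ε : ℝ} (hε : 0 < ε) :
    ∃ T, ContDiff ℝ ∞ T ∧ T =ᶠ[𝓝 0] F ∧
      (∀ j, (w.1 + w.2) * j ≤ m → ∀ p, ‖iteratedFDeriv ℝ j T p‖ ≤ ε) ∧
      ∀ s > 0, ∀ p : ℝ × ℝ, |p.1| ≤ s ^ w.1 → |p.2| ≤ s ^ w.2 → |T p| ≤ ε * s ^ m := by
  let χ : ContDiffBump (0 : ℝ × ℝ) := ⟨1 / 2, 1, by norm_num, by norm_num⟩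
  have hH : ContDiff ℝ ∞ fun p => F p * χ p := hF.contDiff.mul χ.contDiff
  have hbound (j : ℕ) : ∃ B, ∀ p, ‖iteratedFDeriv ℝ j (fun p => F p * χ p) p‖ ≤ B :=
    (χ.hasCompactSupport.mul_left.iteratedFDeriv j).exists_bound_of_continuous
      (hH.continuous_iteratedFDeriv (by exact_mod_cast le_top))
  choose B hB using hbound
  obtain ⟨M, hM0, hM⟩ := hF.exists_abs_le
  obtain ⟨r, hr1, hMr, hBr⟩ :
      ∃ r : ℝ, 1 ≤ r ∧ M ≤ ε * r ∧ ∀ j ∈ Finset.range (m + 1), B j ≤ ε * r :=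
    have hlarge (c : ℝ) : ∀ᶠ r in atTop, c ≤ ε * r :=
      (tendsto_id.const_mul_atTop hε).eventually_ge_atTop c
    ((eventually_ge_atTop 1).and ((hlarge M).and
      ((Finset.range (m + 1)).eventually_all.2 fun j _ => hlarge (B j)))).exists
  have hr : 0 < r := one_pos.trans_le hr1
  refine ⟨fun p => F p * χ (weightedDilation w r p), 
    hF.contDiff.mul (χ.contDiff.comp (weightedDilation w r).contDiff), ?_, fun j hj p => ?_,
    fun s hs p hx hy => ?_⟩
  · have hχ := ((weightedDilation w r).continuous.tendsto' 0 0 (map_zero _)).eventually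
      χ.eventuallyEq_one
    filter_upwards [hχ] with p hp
    rw [hp, Pi.one_apply, mul_one]
  · have hjm : j ∈ Finset.range (m + 1) := Finset.mem_range.2 (by nlinarith)
    rw [hF.mul_comp_weightedDilation χ hr, iteratedFDeriv_const_smul_apply
      ((hH.comp (weightedDilation w r).contDiff).contDiffAt.of_le (by exact_mod_cast le_top)),
      norm_smul, Real.norm_of_nonneg (by positivity), inv_pow, inv_mul_le_iff₀ (by positivity)]
    calc _ ≤ B j * r ^ ((w.1 + w.2) * j) :=
          norm_iteratedFDeriv_comp_weightedDilation_le hH (hB j) hr1 p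
      _ ≤ ε * r * r ^ m := by
          gcongr
          exact hBr j hjm
      _ = r ^ (m + 1) * ε := by ring
  · refine (abs_mul_comp_weightedDilation_le χ le_rfl hM0 hM hr hs hx hy).trans ?_
    gcongr
    exact (div_le_iff₀ hr).2 hMr

theorem HasWeightedOrder.tsum {T : ℕ → ℝ × ℝ → ℝ} {ε : ℕ → ℝ} (hε : Summable ε)
    (hT : ∀ k, ∀ s > 0, s ≤ 1 → ∀ p : ℝ × ℝ, |p.1| ≤ s ^ w.1 → |p.2| ≤ s ^ w.2 →
      |T k p| ≤ ε k * s ^ m) : HasWeightedOrder w m fun p => ∑' k, T k p := by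
  refine IsBigO.of_bound (∑' k, ε k) ?_
  have hle : ∀ᶠ s : ℝ in 𝓝[>] 0, 0 < s ∧ s ≤ 1 :=
    (Ioc_mem_nhdsGT one_pos : Set.Ioc (0 : ℝ) 1 ∈ 𝓝[>] 0)
  filter_upwards [eventually_weightedBoxes w, (tendsto_fst_weightedBoxes w).eventually hle]
    with q hq hs
  rw [Real.norm_of_nonneg (pow_nonneg hs.1.le m)]
  exact tsum_of_norm_bounded (hε.hasSum.mul_right _) fun k => hT k q.1 hs.1 hs.2 q.2 hq.1 hq.2

theorem exists_contDiff_forall_hasWeightedOrder_sub_sum (hw : 0 < w.1 ∧ 0 < w.2) {d : ℕ}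
    {F : ℕ → ℝ × ℝ → ℝ} (hF : ∀ n, WeightedHomogeneous w (n + d + 1) (F n)) :
    ∃ f, ContDiff ℝ ∞ f ∧
      ∀ n, HasWeightedOrder w (n + d + 1) fun p => f p - ∑ k ∈ Finset.range n, F k p := by
  choose T hT hTF hderiv hbox using fun k =>
    (hF k).exists_eventuallyEq_small hw (pow_pos one_half_pos k)
  have hsummable (p : ℝ × ℝ) : Summable fun k => T k p :=
    .of_norm_bounded summable_geometric_two fun k => by simpa using hderiv k 0 (by simp) p
  refine ⟨fun p => ∑' k, T k p, ?_, fun n => ?_⟩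
  · refine contDiff_tsum_of_eventually (v := fun _ k => (1 / 2) ^ k) hT
      (fun _ _ => summable_geometric_two) fun j _ => ?_
    rw [Nat.cofinite_eq_atTop]
    filter_upwards [eventually_ge_atTop ((w.1 + w.2) * j)] with k hk p
    exact hderiv k j (hk.trans (Nat.le_add_right k d)) p
  have htail (n : ℕ) : HasWeightedOrder w (n + d) fun p =>
      ∑' k, T k p - ∑ k ∈ Finset.range n, F k p := by
    have hrest : HasWeightedOrder w (n + d) fun p => ∑' k, T (k + n) p :=
      .tsum summable_geometric_two fun k s hs hs1 p hx hy =>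
        (hbox (k + n) s hs p hx hy).trans <| by
          gcongr ?_ * ?_
          · exact pow_le_pow_of_le_one (by norm_num) (by norm_num) (by omega)
          · exact pow_le_pow_of_le_one hs.le hs1 (by omega)
    refine hrest.congr hw ?_
    filter_upwards [(Finset.range n).eventually_all.2 fun k _ => hTF k] with p hp
    rw [← (hsummable p).sum_add_tsum_nat_add n, Finset.sum_congr rfl hp, add_sub_cancel_left]
  refine ((Nat.add_right_comm n 1 d ▸ htail (n + 1)).add (hF n).hasWeightedOrder).congr hw ?_
  refine .of_forall fun p => ?_
  dsimp only
  rw [Finset.sum_range_succ]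
  ring

theorem exists_contDiff_forall_hasWeightedOrder_sub (hw : 0 < w.1 ∧ 0 < w.2) {d : ℕ}
    {F : ℕ → ℝ × ℝ → ℝ} (hF0 : ContDiff ℝ ∞ (F 0))
    (hF : ∀ n, WeightedHomogeneous w (n + d + 1) fun p => F (n + 1) p - F n p) :
    ∃ f, ContDiff ℝ ∞ f ∧ ∀ n, HasWeightedOrder w (n + d + 1) fun p => f p - F n p := by
  obtain ⟨f, hf, hfF⟩ := exists_contDiff_forall_hasWeightedOrder_sub_sum hw hF
  refine ⟨fun p => F 0 p + f p, hF0.add hf, fun n => (hfF n).congr hw (.of_forall fun p => ?_)⟩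
  dsimp only
  rw [Finset.sum_range_sub fun k => F k p]
  ring

end Borel

/-! ### Formal conjugation to the intermediate normal form -/

section Formal

variable {κ : ℝ} {g : ℝ × ℝ → ℝ} {n : ℕ}

/-- The weighted homogeneous part, of degree `8` for the weights `(3, 2)`, of all the germs under
consideration. -/
def principalPart (p : ℝ × ℝ) : ℝ :=
  p.1 ^ 2 * p.2 + p.2 ^ 4

/-- The second component `x²y + y⁴ + a y⁵` of the normal forms. -/
def quinticForm (a : ℝ) (p : ℝ × ℝ) : ℝ :=
  p.1 ^ 2 * p.2 + p.2 ^ 4 + a * p.2 ^ 5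

theorem contDiff_quinticForm (a : ℝ) : ContDiff ℝ ∞ (quinticForm a) := by
  unfold quinticForm; fun_prop

theorem hasWeightedOrder_principalPart : HasWeightedOrder (3, 2) 8 principalPart :=
  ((HasWeightedOrder.fst.pow 2).mul .snd).add (HasWeightedOrder.snd.pow 4)

theorem hasWeightedOrder_cuspPoly : HasWeightedOrder (3, 2) 6 cuspPoly :=
  (HasWeightedOrder.fst.pow 2).add ((HasWeightedOrder.snd.pow 3).const_mul 4)

theorem HasWeightedOrder.of_sub_principalPart {k : ℕ} (hk : 8 ≤ k)
    (hg : HasWeightedOrder (3, 2) k fun p => g p - principalPart p) :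
    HasWeightedOrder (3, 2) 8 g :=
  ((hg.mono hk).add hasWeightedOrder_principalPart).congr (by simp)
    (.of_forall fun p => sub_add_cancel _ _)

theorem HasWeightedOrder.sub_principalPart {a : ℝ}
    (hg : HasWeightedOrder (3, 2) 11 fun p => g p - quinticForm a p) :
    HasWeightedOrder (3, 2) 9 fun p => g p - principalPart p :=
  ((hg.mono (by norm_num)).add (((HasWeightedOrder.snd.pow 5).const_mul a).mono
    (by norm_num))).congr (by simp) (.of_forall fun p => by
      simp only [quinticForm, principalPart]; ring)

theorem WeightedHomogeneous.comp_sub_comp_principalPart {F : ℝ × ℝ → ℝ} {m : ℕ}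
    (hF : WeightedHomogeneous (3, 8) m F)
    (hg : HasWeightedOrder (3, 2) 9 fun p => g p - principalPart p) :
    HasWeightedOrder (3, 2) (m + 1) fun p => F (p.1, g p) - F (p.1, principalPart p) := by
  simpa using HasWeightedOrder.comp_add_sub_comp (w := (3, 2)) (l := 1) (by simp) hF.contDiff
    hF.hasWeightedOrder .fst hasWeightedOrder_principalPart .zero hg

/-- Solvability, in weighted homogeneous increments `a`, `b`, `d` of the coordinate changes, of the
linearisation at `principalPart` of the equation `principalPart (A (x, g), D) = B (x, g)`, with
error term `u`. -/
def HomologicalSolvable (n : ℕ) (u : ℝ × ℝ → ℝ) : Prop :=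
  ∃ a b d : ℝ × ℝ → ℝ, WeightedHomogeneous (3, 8) (n + 6) a ∧
    WeightedHomogeneous (3, 8) (n + 11) b ∧ WeightedHomogeneous (3, 2) (n + 5) d ∧
    ∀ p : ℝ × ℝ, u p + a (p.1, principalPart p) * (2 * p.1 * p.2) + d p * cuspPoly p =
      b (p.1, principalPart p)

namespace HomologicalSolvable

variable {u v : ℝ × ℝ → ℝ}

theorem add (hu : HomologicalSolvable n u) (hv : HomologicalSolvable n v) :
    HomologicalSolvable n fun p => u p + v p := by
  obtain ⟨a, b, d, ha, hb, hd, hu⟩ := hu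
  obtain ⟨a', b', d', ha', hb', hd', hv⟩ := hv
  exact ⟨_, _, _, ha.add ha', hb.add hb', hd.add hd', fun p => by
    linear_combination hu p + hv p⟩

theorem const_mul (c : ℝ) (hu : HomologicalSolvable n u) :
    HomologicalSolvable n fun p => c * u p := by
  obtain ⟨a, b, d, ha, hb, hd, hu⟩ := hu
  exact ⟨_, _, _, ha.const_mul c, hb.const_mul c, hd.const_mul c, fun p => by
    linear_combination c * hu p⟩

theorem zero : HomologicalSolvable n fun _ => 0 :=
  ⟨_, _, _, .zero, .zero, .zero, fun p => by simp⟩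

theorem sum {ι : Type*} {S : Finset ι} {U : ι → ℝ × ℝ → ℝ}
    (hU : ∀ i ∈ S, HomologicalSolvable n (U i)) :
    HomologicalSolvable n fun p => ∑ i ∈ S, U i p := by
  classical
  induction S using Finset.induction_on with
  | empty => simpa using zero
  | insert i S hi ih =>
    simp only [Finset.sum_insert hi]
    rw [Finset.forall_mem_insert] at hU
    exact hU.1.add (ih hU.2)

theorem monomial {i j : ℕ} (hij : 3 * i + 2 * j = n + 11) :
    HomologicalSolvable n fun p => p.1 ^ i * p.2 ^ j := by
  induction j using Nat.strong_induction_on generalizing i with | _ j ih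
  match j with
  | 0 => exact ⟨_, _, _, .zero, .monomial 1 (i := i) (j := 0) hij, .zero, fun p => by ring⟩
  | 1 =>
    obtain ⟨i, rfl⟩ : ∃ i', i = i' + 1 := ⟨i - 1, by omega⟩
    exact ⟨_, _, _, .monomial (-1 / 2) (i := i) (j := 0) (by dsimp only; omega), .zero, .zero,
      fun p => by ring⟩
  | 2 =>
    obtain ⟨i, rfl⟩ : ∃ i', i = i' + 3 := ⟨i - 3, by omega⟩
    exact ⟨_, _, _, .monomial (-2 / 3) (i := i) (j := 1) (by dsimp only; omega), .zero,
      .monomial (1 / 3) (i := i + 1) (j := 2) (by dsimp only; omega), fun p => by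
        simp only [principalPart, cuspPoly]; ring⟩
  | j + 3 =>
    -- Modulo `cuspPoly`, `y³` is `-x² / 4`.
    have hcusp : HomologicalSolvable n fun p => 1 / 4 * p.1 ^ i * p.2 ^ j * cuspPoly p :=
      ⟨_, _, _, .zero, .zero, .monomial (-1 / 4) (i := i) (j := j) (by dsimp only; omega),
        fun p => by ring⟩
    convert ((ih j (by omega) (i := i + 2) (by omega)).const_mul (-1 / 4)).add hcusp using 2 with p
    simp only [cuspPoly]
    ring

theorem weightedPart (n : ℕ) (u : ℝ × ℝ → ℝ) :
    HomologicalSolvable n (weightedPart (3, 2) (n + 11) u) := by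
  refine sum fun a ha => ?_
  simp only [mul_assoc]
  exact (monomial ((mem_weightedExponents (by simp)).1 ha)).const_mul _

end HomologicalSolvable

theorem pdx_cuspForm (p : ℝ × ℝ) :
    pdx (cuspForm κ) p = 2 * p.1 * p.2 + κ * p.1 * p.2 ^ 2 := by
  obtain ⟨x, y⟩ := p
  refine (hasDerivAt_pdx (contDiff_cuspForm κ) x y).unique ?_
  have hsq := hasDerivAt_pow 2 x
  refine (((hsq.mul_const y).add_const (y ^ 4)).fun_add
    ((((hsq.mul_const (y ^ 2)).div_const 2).add_const (4 * y ^ 5 / 5)).const_mul κ)).congr_deriv ?_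
  push_cast
  ring

theorem hasWeightedOrder_cuspForm : HasWeightedOrder (3, 2) 8 (cuspForm κ) := by
  have hx : HasWeightedOrder (3, 2) 10 fun p => p.1 ^ 2 * p.2 ^ 2 / 2 :=
    (HasWeightedOrder.monomial (1 / 2) 2 2).congr (by simp) (.of_forall fun p => by ring)
  have hy : HasWeightedOrder (3, 2) 10 fun p => 4 * p.2 ^ 5 / 5 :=
    (HasWeightedOrder.monomial (4 / 5) 0 5).congr (by simp) (.of_forall fun p => by ring)
  exact hasWeightedOrder_principalPart.add (((hx.add hy).mono (by norm_num)).const_mul κ)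

theorem hasWeightedOrder_cuspForm_add_sub_linear {l : ℕ} {A D a d : ℝ × ℝ → ℝ}
    (hA : HasWeightedOrder (3, 2) 4 fun p => A p - p.1)
    (hD : HasWeightedOrder (3, 2) 3 fun p => D p - p.2)
    (ha : HasWeightedOrder (3, 2) (l + 4) a) (hd : HasWeightedOrder (3, 2) (l + 3) d) :
    HasWeightedOrder (3, 2) (l + 10) fun p => cuspForm κ (A p + a p, D p + d p) -
      cuspForm κ (A p, D p) - (a p * (2 * p.1 * p.2) + d p * cuspPoly p) := by
  have hlin := HasWeightedOrder.comp_add_sub_comp_sub_linear (l := l) (by simp)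
    (contDiff_cuspForm κ) hasWeightedOrder_cuspForm hA hD (ha.mono (by dsimp only; omega))
    (hd.mono (by dsimp only; omega))
  have hax := ha.mul (HasWeightedOrder.monomial (w := (3, 2)) κ 1 2)
  have hdy := (hd.mul hasWeightedOrder_cuspPoly).mul (HasWeightedOrder.snd.const_mul κ)
  refine (((hlin.mono (by omega : l + 10 ≤ _)).add (hax.mono (by dsimp only; omega))).add
    (hdy.mono (by dsimp only; omega))).congr (by simp) (.of_forall fun p => ?_)
  simp only [pdx_cuspForm, pdy_cuspForm]
  ring

/-- Coordinate changes `A`, `B` of the target and `D` of the second source coordinate which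
conjugate `(x, g)` to `(x, cuspForm κ)` up to an error of weighted order `n + 11`. -/
structure ApproxConjugacy (κ : ℝ) (g : ℝ × ℝ → ℝ) (n : ℕ) where
  A : ℝ × ℝ → ℝ
  B : ℝ × ℝ → ℝ
  D : ℝ × ℝ → ℝ
  contDiff_A : ContDiff ℝ ∞ A
  contDiff_B : ContDiff ℝ ∞ B
  contDiff_D : ContDiff ℝ ∞ D
  order_A : HasWeightedOrder (3, 8) 6 fun p => A p - p.1
  order_B : HasWeightedOrder (3, 8) 11 fun p => B p - p.2
  order_D : HasWeightedOrder (3, 2) 4 fun p => D p - p.2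
  order_error : HasWeightedOrder (3, 2) (n + 11) fun p =>
    cuspForm κ (A (p.1, g p), D p) - B (p.1, g p)

namespace ApproxConjugacy

theorem contDiff_error (S : ApproxConjugacy κ g n) (hg : ContDiff ℝ ∞ g) :
    ContDiff ℝ ∞ fun p => cuspForm κ (S.A (p.1, g p), S.D p) - S.B (p.1, g p) := by
  have hA := S.contDiff_A
  have hB := S.contDiff_B
  have hD := S.contDiff_D
  have hκ := contDiff_cuspForm κ
  fun_prop

/-- The constants `κ = -5 * a / 6` and `5 * a / 12` are those for which the linearised error, a
combination of `x²y²` and `y⁵`, vanishes. -/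
def initial {a : ℝ}
    (hg : HasWeightedOrder (3, 2) 11 fun p => g p - quinticForm a p) :
    ApproxConjugacy (-5 * a / 6) g 0 where
  A p := p.1
  B p := p.2
  D p := p.2 + 5 * a / 12 * p.2 ^ 2
  contDiff_A := by fun_prop
  contDiff_B := by fun_prop
  contDiff_D := by fun_prop
  order_A := by simpa using .zero
  order_B := by simpa using .zero
  order_D := by
    simp only [add_sub_cancel_left]
    exact (HasWeightedOrder.snd.pow 2).const_mul (5 * a / 12)
  order_error := by
    have hlin := hasWeightedOrder_cuspForm_add_sub_linear (κ := -5 * a / 6) (l := 1)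
      (A := fun p => p.1) (D := fun p => p.2) (by simpa using .zero) (by simpa using .zero) .zero
      ((HasWeightedOrder.snd.pow 2).const_mul (5 * a / 12))
    refine (hlin.sub hg).congr (by simp) (.of_forall fun p => ?_)
    simp only [cuspForm, cuspPoly, quinticForm]
    ring

theorem exists_succ (S : ApproxConjugacy κ g n) (hgs : ContDiff ℝ ∞ g)
    (hg : HasWeightedOrder (3, 2) 9 fun p => g p - principalPart p) :
    ∃ S' : ApproxConjugacy κ g (n + 1),
      WeightedHomogeneous (3, 8) (n + 6) (fun p => S'.A p - S.A p) ∧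
      WeightedHomogeneous (3, 8) (n + 11) (fun p => S'.B p - S.B p) ∧
      WeightedHomogeneous (3, 2) (n + 5) fun p => S'.D p - S.D p := by
  obtain ⟨a, b, d, ha, hb, hd, hsol⟩ := HomologicalSolvable.weightedPart n fun p =>
    cuspForm κ (S.A (p.1, g p), S.D p) - S.B (p.1, g p)
  have hg8 := HasWeightedOrder.of_sub_principalPart (by norm_num) hg
  have hcomp {m : ℕ} {F : ℝ × ℝ → ℝ} (hF : HasWeightedOrder (3, 8) m F) :
      HasWeightedOrder (3, 2) m fun p => F (p.1, g p) := hF.comp (by simp) .fst hg8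
  have hlin := hasWeightedOrder_cuspForm_add_sub_linear (κ := κ) (l := n + 2)
    ((hcomp S.order_A).mono (by norm_num)) (S.order_D.mono (by norm_num))
    (hcomp ha.hasWeightedOrder) hd.hasWeightedOrder
  have ha' := (ha.comp_sub_comp_principalPart hg).mul
    (HasWeightedOrder.monomial (w := (3, 2)) 2 1 1)
  have hlead := S.order_error.sub_weightedPart (by simp) (S.contDiff_error hgs)
  refine ⟨⟨fun p => S.A p + a p, fun p => S.B p + b p, fun p => S.D p + d p,
    S.contDiff_A.add ha.contDiff, S.contDiff_B.add hb.contDiff, S.contDiff_D.add hd.contDiff,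
    ?_, ?_, ?_, ?_⟩, by simpa using ha, by simpa using hb, by simpa using hd⟩
  · simpa only [add_sub_right_comm] using S.order_A.add (ha.hasWeightedOrder.mono (by omega))
  · simpa only [add_sub_right_comm] using S.order_B.add (hb.hasWeightedOrder.mono (by omega))
  · simpa only [add_sub_right_comm] using S.order_D.add (hd.hasWeightedOrder.mono (by omega))
  · refine (((hlin.add (ha'.mono (by dsimp only; omega))).add hlead).sub
      (hb.comp_sub_comp_principalPart hg)).congr (by simp) (.of_forall fun p => ?_)
    linear_combination -hsol p

theorem exists_sequence {a : ℝ} (hgs : ContDiff ℝ ∞ g)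
    (hg : HasWeightedOrder (3, 2) 11 fun p => g p - quinticForm a p) :
    ∃ S : ∀ n, ApproxConjugacy (-5 * a / 6) g n, ∀ n,
      WeightedHomogeneous (3, 8) (n + 6) (fun p => (S (n + 1)).A p - (S n).A p) ∧
      WeightedHomogeneous (3, 8) (n + 11) (fun p => (S (n + 1)).B p - (S n).B p) ∧
      WeightedHomogeneous (3, 2) (n + 5) fun p => (S (n + 1)).D p - (S n).D p := by
  choose next hnext using fun n (S : ApproxConjugacy (-5 * a / 6) g n) =>
    S.exists_succ hgs hg.sub_principalPart
  exact ⟨fun n => Nat.rec (initial hg) next n, fun n => hnext n _⟩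

theorem order_error_of_sub (S : ApproxConjugacy κ g n) (hg : HasWeightedOrder (3, 2) 8 g)
    {A B D : ℝ × ℝ → ℝ} (hA : HasWeightedOrder (3, 8) (n + 6) fun p => A p - S.A p)
    (hB : HasWeightedOrder (3, 8) (n + 11) fun p => B p - S.B p)
    (hD : HasWeightedOrder (3, 2) (n + 5) fun p => D p - S.D p) :
    HasWeightedOrder (3, 2) (n + 11) fun p => cuspForm κ (A (p.1, g p), D p) - B (p.1, g p) := by
  have hcomp {m : ℕ} {F : ℝ × ℝ → ℝ} (hF : HasWeightedOrder (3, 8) m F) :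
      HasWeightedOrder (3, 2) m fun p => F (p.1, g p) := hF.comp (by simp) .fst hg
  have hSA : HasWeightedOrder (3, 2) 3 fun p => S.A (p.1, g p) :=
    (((hcomp S.order_A).mono (by norm_num)).add .fst).congr (by simp)
      (.of_forall fun p => sub_add_cancel _ _)
  have hSD : HasWeightedOrder (3, 2) 2 S.D :=
    ((S.order_D.mono (by norm_num)).add .snd).congr (by simp)
      (.of_forall fun p => sub_add_cancel _ _)
  have hκ := HasWeightedOrder.comp_add_sub_comp (by simp) (contDiff_cuspForm κ)
    hasWeightedOrder_cuspForm (l := n + 3) hSA hSD ((hcomp hA).mono (by dsimp only; omega))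
    (hD.mono (by dsimp only; omega))
  refine (((hκ.mono (by omega)).add S.order_error).sub (hcomp hB)).congr (by simp)
    (.of_forall fun p => ?_)
  simp only [add_sub_cancel]
  ring

theorem exists_isFlat_error {a : ℝ} (hgs : ContDiff ℝ ∞ g)
    (hg : HasWeightedOrder (3, 2) 11 fun p => g p - quinticForm a p) :
    ∃ S : ApproxConjugacy (-5 * a / 6) g 0, IsFlat fun p =>
      cuspForm (-5 * a / 6) (S.A (p.1, g p), S.D p) - S.B (p.1, g p) := by
  obtain ⟨S, hS⟩ := exists_sequence hgs hg
  have hw : 0 < 3 ∧ 0 < 2 := by simp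
  have hz : 0 < 3 ∧ 0 < 8 := by simp
  obtain ⟨A, hA, hAS⟩ := exists_contDiff_forall_hasWeightedOrder_sub (d := 5) (w := (3, 8))
    (F := fun n => (S n).A) hz (S 0).contDiff_A fun n => (hS n).1
  obtain ⟨B, hB, hBS⟩ := exists_contDiff_forall_hasWeightedOrder_sub (d := 10) (w := (3, 8))
    (F := fun n => (S n).B) hz (S 0).contDiff_B fun n => (hS n).2.1
  obtain ⟨D, hD, hDS⟩ := exists_contDiff_forall_hasWeightedOrder_sub (d := 4) (w := (3, 2))
    (F := fun n => (S n).D) hw (S 0).contDiff_D fun n => (hS n).2.2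
  have herror (n : ℕ) := (S n).order_error_of_sub
    (.of_sub_principalPart (by norm_num) hg.sub_principalPart) (hAS n) (hBS n) (hDS n)
  have hcancel {F G H : ℝ × ℝ → ℝ} (p : ℝ × ℝ) : F p - G p + (G p - H p) = F p - H p :=
    sub_add_sub_cancel _ _ _
  let T : ApproxConjugacy (-5 * a / 6) g 0 :=
    { A, B, D
      contDiff_A := hA
      contDiff_B := hB
      contDiff_D := hD
      order_A := ((hAS 0).add (S 0).order_A).congr hz (.of_forall hcancel)
      order_B := ((hBS 0).add (S 0).order_B).congr hz (.of_forall hcancel)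
      order_D := (((hDS 0).mono (by norm_num)).add (S 0).order_D).congr hw (.of_forall hcancel)
      order_error := herror 0 }
  exact ⟨T, HasWeightedOrder.isFlat hw (T.contDiff_error hgs) fun n =>
    (herror n).mono (Nat.le_add_right n 11)⟩

end ApproxConjugacy

end Formal

/-! ### Normal forms -/

section NormalForm

theorem hasFDerivAt_prodMk_zero {U V : ℝ × ℝ → ℝ} (hU : ContDiff ℝ ∞ U) (hV : ContDiff ℝ ∞ V) :
    HasFDerivAt (fun p => (U p, V p)) (LinearMap.toContinuousLinearMap
      (Matrix.toLin (Module.Basis.finTwoProd ℝ) (Module.Basis.finTwoProd ℝ)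
        !![tcoeff U 1 0, tcoeff U 0 1; tcoeff V 1 0, tcoeff V 0 1])) 0 := by
  have hd := (hU.differentiable (by simp) 0).hasFDerivAt.prodMk
    (hV.differentiable (by simp) 0).hasFDerivAt
  refine hd.congr_fderiv ?_
  ext <;> simp [tcoeff, pdx, pdy, dop, Matrix.toLin_finTwoProd_apply]

theorem isDiffeoGerm_prodMk_iff {U V : ℝ × ℝ → ℝ} (hU : ContDiff ℝ ∞ U) (hV : ContDiff ℝ ∞ V)
    (hU0 : U 0 = 0) (hV0 : V 0 = 0) :
    IsDiffeoGerm (fun p => (U p, V p)) ↔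
      tcoeff U 1 0 * tcoeff V 0 1 - tcoeff U 0 1 * tcoeff V 1 0 ≠ 0 := by
  have hmap : ((U 0, V 0) : ℝ × ℝ) = 0 := Prod.ext hU0 hV0
  rw [IsDiffeoGerm, (hasFDerivAt_prodMk_zero hU hV).fderiv, and_iff_right (hU.prodMk hV),
    and_iff_right hmap, LinearMap.coe_toContinuousLinearMap', ← Module.End.isUnit_iff,
    LinearMap.isUnit_iff_isUnit_det, LinearMap.det_toLin, Matrix.det_fin_two_of, isUnit_iff_ne_zero]

theorem HasWeightedOrder.tcoeff_eq {w : ℕ × ℕ} {k : ℕ} {u v : ℝ × ℝ → ℝ} (hw : 0 < w.1 ∧ 0 < w.2)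
    (hu : ContDiff ℝ ∞ u) (hv : ContDiff ℝ ∞ v) (huv : HasWeightedOrder w k fun p => u p - v p)
    {i j : ℕ} (hij : w.1 * i + w.2 * j < k) : tcoeff u i j = tcoeff v i j :=
  sub_eq_zero.1 ((tcoeff_sub hu hv i j).symm.trans (huv.tcoeff_eq_zero hw (hu.sub hv) hij))

theorem tcoeff_const_mul_fst (c : ℝ) (i j : ℕ) :
    tcoeff (fun p => c * p.1) i j = if (1, 0) = (i, j) then c else 0 := by
  simpa using tcoeff_monomial c (1, 0) i j

theorem tcoeff_const_mul_snd (c : ℝ) (i j : ℕ) :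
    tcoeff (fun p => c * p.2) i j = if (0, 1) = (i, j) then c else 0 := by
  simpa using tcoeff_monomial c (0, 1) i j

theorem tcoeff_fst (i j : ℕ) : tcoeff Prod.fst i j = if (1, 0) = (i, j) then 1 else 0 := by
  simpa using tcoeff_const_mul_fst 1 i j

theorem tcoeff_snd (i j : ℕ) : tcoeff Prod.snd i j = if (0, 1) = (i, j) then 1 else 0 := by
  simpa using tcoeff_const_mul_snd 1 i j

theorem HasWeightedOrder.map_zero {w : ℕ × ℕ} {k : ℕ} {u : ℝ × ℝ → ℝ} (hw : 0 < w.1 ∧ 0 < w.2)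
    (hu : ContDiff ℝ ∞ u) (huk : HasWeightedOrder w k u) (hk : 0 < k) : u 0 = 0 :=
  (tcoeff_zero_zero u).symm.trans (huk.tcoeff_eq_zero hw hu (by simpa using hk))

variable {g : ℝ × ℝ → ℝ} {a b κ : ℝ} {n : ℕ}

namespace ApproxConjugacy

theorem map_zero (S : ApproxConjugacy κ g n) : S.A 0 = 0 ∧ S.B 0 = 0 ∧ S.D 0 = 0 := by
  refine ⟨?_, ?_, ?_⟩
  · simpa using S.order_A.map_zero (by simp) (S.contDiff_A.sub contDiff_fst) (by norm_num)
  · simpa using S.order_B.map_zero (by simp) (S.contDiff_B.sub contDiff_snd) (by norm_num)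
  · simpa using S.order_D.map_zero (by simp) (S.contDiff_D.sub contDiff_snd) (by norm_num)

theorem isDiffeoGerm_target (S : ApproxConjugacy κ g n) :
    IsDiffeoGerm fun p => (S.A p, S.B p) := by
  rw [isDiffeoGerm_prodMk_iff S.contDiff_A S.contDiff_B S.map_zero.1 S.map_zero.2.1,
    S.order_A.tcoeff_eq (i := 1) (j := 0) (by simp) S.contDiff_A contDiff_fst (by norm_num),
    S.order_B.tcoeff_eq (i := 1) (j := 0) (by simp) S.contDiff_B contDiff_snd (by norm_num),
    S.order_B.tcoeff_eq (i := 0) (j := 1) (by simp) S.contDiff_B contDiff_snd (by norm_num)]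
  simp [tcoeff_fst, tcoeff_snd]

theorem isDiffeoGerm_source (S : ApproxConjugacy κ g n) (hgs : ContDiff ℝ ∞ g)
    (hg : HasWeightedOrder (3, 2) 8 g) : IsDiffeoGerm fun p => (S.A (p.1, g p), S.D p) := by
  have hA : ContDiff ℝ ∞ fun p => S.A (p.1, g p) := S.contDiff_A.comp (contDiff_fst.prodMk hgs)
  have hA6 : HasWeightedOrder (3, 2) 6 fun p => S.A (p.1, g p) - p.1 :=
    S.order_A.comp (by simp) .fst hg
  have hA0 : S.A ((0 : ℝ × ℝ).1, g 0) = 0 := by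
    rw [hg.map_zero (by simp) hgs (by norm_num)]
    exact S.map_zero.1
  rw [isDiffeoGerm_prodMk_iff hA S.contDiff_D hA0 S.map_zero.2.2,
    hA6.tcoeff_eq (i := 1) (j := 0) (by simp) hA contDiff_fst (by norm_num),
    hA6.tcoeff_eq (i := 0) (j := 1) (by simp) hA contDiff_fst (by norm_num),
    S.order_D.tcoeff_eq (i := 0) (j := 1) (by simp) S.contDiff_D contDiff_snd (by norm_num)]
  simp [tcoeff_fst, tcoeff_snd]

end ApproxConjugacy

theorem aequiv_cuspForm (hgs : ContDiff ℝ ∞ g)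
    (hg : HasWeightedOrder (3, 2) 11 fun p => g p - quinticForm a p) :
    AEquiv (fun p => (p.1, g p)) fun p => (p.1, cuspForm (-5 * a / 6) p) := by
  obtain ⟨S, hflat⟩ := ApproxConjugacy.exists_isFlat_error hgs hg
  have hΘ := S.isDiffeoGerm_source hgs (.of_sub_principalPart (by norm_num) hg.sub_principalPart)
  obtain ⟨K, hK, hKΘ, -⟩ := hΘ.exists_inverse
  refine AEquiv.trans (.of_comp_eq S.isDiffeoGerm_target hΘ (hKΘ.mono fun p hp => ?_))
    ((hflat.comp hK.contDiff hK.map_zero).neg.aequiv_cuspForm_add _)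
  simp only [hp, ← sub_eq_add_neg, sub_sub_cancel]

theorem aequiv_quinticForm (hgs : ContDiff ℝ ∞ g)
    (hg : HasWeightedOrder (3, 2) 11 fun p => g p - quinticForm a p) :
    AEquiv (fun p => (p.1, g p)) fun p => (p.1, quinticForm a p) :=
  (aequiv_cuspForm hgs hg).trans <|
    (aequiv_cuspForm (contDiff_quinticForm a) (by simpa using .zero)).symm
      (contDiff_fst.prodMk (contDiff_quinticForm a)) (by simp [quinticForm])

theorem isDiffeoGerm_diagonal {α β : ℝ} (hα : α ≠ 0) (hβ : β ≠ 0) :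
    IsDiffeoGerm fun p : ℝ × ℝ => (α * p.1, β * p.2) := by
  rw [isDiffeoGerm_prodMk_iff (by fun_prop) (by fun_prop) (by simp) (by simp)]
  simp [tcoeff_const_mul_fst, tcoeff_const_mul_snd, hα, hβ]

theorem aequiv_quinticForm_div_abs (ha : a ≠ 0) :
    AEquiv (fun p => (p.1, quinticForm a p)) fun p => (p.1, quinticForm (a / |a|) p) := by
  have hβ : 0 < |a| := abs_pos.2 ha
  have hα : √(|a| ^ 3) ^ 2 = |a| ^ 3 := Real.sq_sqrt (by positivity)
  refine .of_comp_eq (isDiffeoGerm_diagonal (α := √(|a| ^ 3)) (β := |a| ^ 4) (by positivity)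
    (by positivity)) (isDiffeoGerm_diagonal (α := √(|a| ^ 3)) (β := |a|) (by positivity) hβ.ne')
    (.of_forall fun p => Prod.ext rfl ?_)
  simp only [quinticForm, mul_pow, hα]
  field_simp

theorem HasWeightedOrder.eq_zero_of_sum_monomial {w : ℕ × ℕ} {k : ℕ} {c : ℕ × ℕ → ℝ}
    {S : Finset (ℕ × ℕ)} (hw : 0 < w.1 ∧ 0 < w.2)
    (hsum : HasWeightedOrder w k fun p => ∑ e ∈ S, c e * p.1 ^ e.1 * p.2 ^ e.2) {e : ℕ × ℕ}
    (he : e ∈ S) (hek : w.1 * e.1 + w.2 * e.2 < k) : c e = 0 := by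
  rw [← hsum.tcoeff_eq_zero hw (contDiff_taylorSum c S) hek, tcoeff_sum_monomial, if_pos he]

theorem hasWeightedOrder_quinticForm_comp_sub (b α d₁ d₂ d₂₂ : ℝ) :
    HasWeightedOrder (3, 2) 11 fun p =>
      quinticForm b (α * p.1, d₁ * p.1 + d₂ * p.2 + d₂₂ * p.2 ^ 2) -
        (α ^ 2 * d₁ * p.1 ^ 3 + α ^ 2 * d₂ * p.1 ^ 2 * p.2 + d₂ ^ 4 * p.2 ^ 4 +
          4 * d₂ ^ 3 * d₁ * p.1 * p.2 ^ 3 +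
          (α ^ 2 * d₂₂ + 6 * d₂ ^ 2 * d₁ ^ 2) * p.1 ^ 2 * p.2 ^ 2 +
          (4 * d₂ ^ 3 * d₂₂ + b * d₂ ^ 5) * p.2 ^ 5) := by
  have hy : HasWeightedOrder (3, 2) 2 fun p => d₂ * p.2 := .const_mul _ .snd
  have hz : HasWeightedOrder (3, 2) 3 fun p => d₁ * p.1 + d₂₂ * p.2 ^ 2 :=
    (HasWeightedOrder.fst.const_mul _).add
      (((HasWeightedOrder.snd.pow 2).const_mul _).mono (by norm_num))
  have hquintic : HasWeightedOrder (3, 2) 11 fun p =>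
      b * (d₂ * p.2 + (d₁ * p.1 + d₂₂ * p.2 ^ 2)) ^ 5 - b * (d₂ * p.2) ^ 5 := by
    simpa using HasWeightedOrder.comp_add_sub_comp (u := fun p => b * p.2 ^ 5) (l := 1) (by simp)
      (by fun_prop) ((HasWeightedOrder.snd.pow 5).const_mul b) .fst hy .zero hz
  refine (((((hy.const_mul 4).mul (hz.pow 3)).add ((hz.pow 4).mono (by norm_num))).add
    ((HasWeightedOrder.monomial (12 * d₂ ^ 2 * d₁ * d₂₂) 1 4).add
      ((HasWeightedOrder.monomial (6 * d₂ ^ 2 * d₂₂ ^ 2) 0 6).mono (by norm_num)))).add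
    hquintic).congr (by simp) (.of_forall fun p => ?_)
  simp only [quinticForm]
  ring

theorem eq_mul_of_hasWeightedOrder_quinticForm_comp {α d₁ d₂ d₂₂ b₁ b₁₁ b₁₁₁ b₂ : ℝ} (hα : α ≠ 0)
    (hd₂ : d₂ ≠ 0) (h : HasWeightedOrder (3, 2) 11 fun p =>
      quinticForm b (α * p.1, d₁ * p.1 + d₂ * p.2 + d₂₂ * p.2 ^ 2) -
        (b₁ * p.1 + b₁₁ * p.1 ^ 2 + b₁₁₁ * p.1 ^ 3 + b₂ * quinticForm a p)) :
    a = b * d₂ := by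
  let c : ℕ × ℕ → ℝ
    | (1, 0) => -b₁
    | (2, 0) => -b₁₁
    | (3, 0) => α ^ 2 * d₁ - b₁₁₁
    | (2, 1) => α ^ 2 * d₂ - b₂
    | (0, 4) => d₂ ^ 4 - b₂
    | (1, 3) => 4 * d₂ ^ 3 * d₁
    | (2, 2) => α ^ 2 * d₂₂ + 6 * d₂ ^ 2 * d₁ ^ 2
    | (0, 5) => 4 * d₂ ^ 3 * d₂₂ + b * d₂ ^ 5 - b₂ * a
    | _ => 0
  have hc : HasWeightedOrder (3, 2) 11 fun p => ∑ e ∈ {(1, 0), (2, 0), (3, 0), (2, 1), (0, 4),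
      (1, 3), (2, 2), (0, 5)}, c e * p.1 ^ e.1 * p.2 ^ e.2 := by
    refine (h.sub (hasWeightedOrder_quinticForm_comp_sub b α d₁ d₂ d₂₂)).congr (by simp)
      (.of_forall fun p => ?_)
    dsimp only
    repeat rw [Finset.sum_insert (by decide)]
    rw [Finset.sum_singleton]
    simp only [quinticForm, c]
    ring
  have h04 : d₂ ^ 4 - b₂ = 0 :=
    hc.eq_zero_of_sum_monomial (e := (0, 4)) (by simp) (by simp) (by simp)
  have h13 : 4 * d₂ ^ 3 * d₁ = 0 :=
    hc.eq_zero_of_sum_monomial (e := (1, 3)) (by simp) (by simp) (by simp)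
  have h22 : α ^ 2 * d₂₂ + 6 * d₂ ^ 2 * d₁ ^ 2 = 0 :=
    hc.eq_zero_of_sum_monomial (e := (2, 2)) (by simp) (by simp) (by simp)
  have h05 : 4 * d₂ ^ 3 * d₂₂ + b * d₂ ^ 5 - b₂ * a = 0 :=
    hc.eq_zero_of_sum_monomial (e := (0, 5)) (by simp) (by simp) (by simp)
  obtain rfl : d₁ = 0 := by simpa [hd₂] using h13
  obtain rfl : d₂₂ = 0 := by simpa [hα] using h22
  refine mul_left_cancel₀ (pow_ne_zero 4 hd₂) ?_
  linear_combination -h05 + a * h04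

theorem hasWeightedOrder_quinticForm : HasWeightedOrder (3, 2) 8 (quinticForm b) :=
  hasWeightedOrder_principalPart.add
    (((HasWeightedOrder.snd.pow 5).const_mul b).mono (by norm_num))

theorem HasWeightedOrder.quinticForm_comp_sub_comp {l : ℕ} {u v u' v' : ℝ × ℝ → ℝ}
    (hu : HasWeightedOrder (3, 2) (3 + l) fun p => u' p - u p)
    (hv : HasWeightedOrder (3, 2) (2 + l) fun p => v' p - v p)
    (hu3 : HasWeightedOrder (3, 2) 3 u) (hv2 : HasWeightedOrder (3, 2) 2 v) :
    HasWeightedOrder (3, 2) (8 + l) fun p =>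
      quinticForm b (u' p, v' p) - quinticForm b (u p, v p) := by
  simpa using HasWeightedOrder.comp_add_sub_comp (by simp) (contDiff_quinticForm b)
    hasWeightedOrder_quinticForm hu3 hv2 hu hv

theorem hasWeightedOrder_six_sub_taylor {u : ℝ × ℝ → ℝ} (hu : ContDiff ℝ ∞ u) (hu0 : u 0 = 0) :
    HasWeightedOrder (3, 8) 6 fun p => u p - tcoeff u 1 0 * p.1 := by
  simpa [tcoeff_zero_zero, hu0] using HasWeightedOrder.sub_taylorSum (w := (3, 8)) (k := 6)
    (S := {(0, 0), (1, 0)}) (by simp) hu fun i j hij => by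
      simp only [Finset.mem_insert, Finset.mem_singleton, Prod.mk.injEq]
      dsimp only at hij
      omega

theorem hasWeightedOrder_eleven_sub_taylor {u : ℝ × ℝ → ℝ} (hu : ContDiff ℝ ∞ u) (hu0 : u 0 = 0) :
    HasWeightedOrder (3, 8) 11 fun p => u p - (tcoeff u 1 0 * p.1 + tcoeff u 2 0 * p.1 ^ 2 +
      tcoeff u 3 0 * p.1 ^ 3 + tcoeff u 0 1 * p.2) := by
  simpa [tcoeff_zero_zero, hu0, add_assoc] using HasWeightedOrder.sub_taylorSum (w := (3, 8))
    (k := 11) (S := {(0, 0), (1, 0), (2, 0), (3, 0), (0, 1)}) (by simp) hu fun i j hij => by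
      simp only [Finset.mem_insert, Finset.mem_singleton, Prod.mk.injEq]
      dsimp only at hij
      omega

theorem hasWeightedOrder_five_sub_taylor {u : ℝ × ℝ → ℝ} (hu : ContDiff ℝ ∞ u) (hu0 : u 0 = 0) :
    HasWeightedOrder (3, 2) 5 fun p => u p - (tcoeff u 1 0 * p.1 + tcoeff u 0 1 * p.2 +
      tcoeff u 0 2 * p.2 ^ 2) := by
  simpa [tcoeff_zero_zero, hu0, add_assoc] using HasWeightedOrder.sub_taylorSum (w := (3, 2))
    (k := 5) (S := {(0, 0), (1, 0), (0, 1), (0, 2)}) (by simp) hu fun i j hij => by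
      simp only [Finset.mem_insert, Finset.mem_singleton, Prod.mk.injEq]
      dsimp only at hij
      omega

theorem exists_expansion_of_aequiv_quinticForm (hg : HasWeightedOrder (3, 2) 8 g)
    (h : AEquiv (fun p => (p.1, g p)) fun p => (p.1, quinticForm b p)) :
    ∃ α d₁ d₂ d₂₂ b₁ b₁₁ b₁₁₁ b₂ : ℝ, α ≠ 0 ∧ d₂ ≠ 0 ∧ HasWeightedOrder (3, 2) 11 fun p =>
      quinticForm b (α * p.1, d₁ * p.1 + d₂ * p.2 + d₂₂ * p.2 ^ 2) -
        (b₁ * p.1 + b₁₁ * p.1 ^ 2 + b₁₁₁ * p.1 ^ 3 + b₂ * g p) := by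
  obtain ⟨S, T, ⟨hS, hS0, -⟩, hT, hST⟩ := h.exists_comp_eq
  let A p := (S p).1
  let B p := (S p).2
  let T₁ p := (T p).1
  let T₂ p := (T p).2
  have hA6 : HasWeightedOrder (3, 8) 6 fun p => A p - tcoeff A 1 0 * p.1 :=
    hasWeightedOrder_six_sub_taylor hS.fst (congrArg Prod.fst hS0)
  have hB11 : HasWeightedOrder (3, 8) 11 fun p => B p - (tcoeff B 1 0 * p.1 +
      tcoeff B 2 0 * p.1 ^ 2 + tcoeff B 3 0 * p.1 ^ 3 + tcoeff B 0 1 * p.2) :=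
    hasWeightedOrder_eleven_sub_taylor hS.snd (congrArg Prod.snd hS0)
  have hT₂5 : HasWeightedOrder (3, 2) 5 fun p => T₂ p - (tcoeff T₂ 1 0 * p.1 +
      tcoeff T₂ 0 1 * p.2 + tcoeff T₂ 0 2 * p.2 ^ 2) :=
    hasWeightedOrder_five_sub_taylor hT.contDiff.snd (congrArg Prod.snd hT.map_zero)
  have hT₁6 : HasWeightedOrder (3, 2) 6 fun p => T₁ p - tcoeff A 1 0 * p.1 :=
    (hA6.comp (w := (3, 2)) (by simp) .fst hg).congr (by simp) (hST.mono fun p hp =>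
      congrArg (· - tcoeff A 1 0 * p.1) (show A (p.1, g p) = T₁ p from (Prod.ext_iff.1 hp).1))
  have hdet : tcoeff A 1 0 ≠ 0 ∧ tcoeff T₂ 0 1 ≠ 0 := by
    have hdet := (isDiffeoGerm_prodMk_iff hT.contDiff.fst hT.contDiff.snd
      (congrArg Prod.fst hT.map_zero) (congrArg Prod.snd hT.map_zero)).1 hT
    rwa [hT₁6.tcoeff_eq (i := 1) (j := 0) (by simp) hT.contDiff.fst (by fun_prop) (by norm_num),
      hT₁6.tcoeff_eq (i := 0) (j := 1) (by simp) hT.contDiff.fst (by fun_prop) (by norm_num),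
      tcoeff_const_mul_fst, tcoeff_const_mul_fst, if_pos rfl, if_neg (by simp), zero_mul, sub_zero,
      mul_ne_zero_iff] at hdet
  have hq : HasWeightedOrder (3, 2) 2 fun p =>
      tcoeff T₂ 1 0 * p.1 + tcoeff T₂ 0 1 * p.2 + tcoeff T₂ 0 2 * p.2 ^ 2 :=
    (((HasWeightedOrder.fst.const_mul _).mono (by norm_num)).add (.const_mul _ .snd)).add
      (((HasWeightedOrder.snd.pow 2).const_mul _).mono (by norm_num))
  refine ⟨tcoeff A 1 0, tcoeff T₂ 1 0, tcoeff T₂ 0 1, tcoeff T₂ 0 2, tcoeff B 1 0, tcoeff B 2 0,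
    tcoeff B 3 0, tcoeff B 0 1, hdet.1, hdet.2, ?_⟩
  refine ((hB11.comp (w := (3, 2)) (by simp) .fst hg).sub
    (HasWeightedOrder.quinticForm_comp_sub_comp (b := b) (l := 3) hT₁6 hT₂5 (.const_mul _ .fst)
      hq)).congr (by simp) (hST.mono fun p hp => ?_)
  have hB : B (p.1, g p) = quinticForm b (T₁ p, T₂ p) := congrArg Prod.snd hp
  simp only [hB]
  ring

theorem exists_ne_zero_eq_mul_of_aequiv_quinticForm
    (hg : HasWeightedOrder (3, 2) 11 fun p => g p - quinticForm a p)
    (h : AEquiv (fun p => (p.1, g p)) fun p => (p.1, quinticForm b p)) :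
    ∃ d : ℝ, d ≠ 0 ∧ a = b * d := by
  obtain ⟨α, d₁, d₂, d₂₂, b₁, b₁₁, b₁₁₁, b₂, hα, hd₂, hexp⟩ :=
    exists_expansion_of_aequiv_quinticForm
      (.of_sub_principalPart (by norm_num) hg.sub_principalPart) h
  have h' : HasWeightedOrder (3, 2) 11 fun p =>
      quinticForm b (α * p.1, d₁ * p.1 + d₂ * p.2 + d₂₂ * p.2 ^ 2) -
        (b₁ * p.1 + b₁₁ * p.1 ^ 2 + b₁₁₁ * p.1 ^ 3 + b₂ * quinticForm a p) :=
    (hexp.add (hg.const_mul b₂)).congr (by simp) (.of_forall fun p => by ring)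
  exact ⟨d₂, hd₂, eq_mul_of_hasWeightedOrder_quinticForm_comp hα hd₂ h'⟩

theorem tcoeff_quinticForm (a : ℝ) (i j : ℕ) : tcoeff (quinticForm a) i j =
    if (i, j) = (0, 5) then a else if (i, j) = (2, 1) ∨ (i, j) = (0, 4) then 1 else 0 := by
  have hsum : quinticForm a = fun p => ∑ e ∈ {(2, 1), (0, 4), (0, 5)},
      (if e = (0, 5) then a else 1) * p.1 ^ e.1 * p.2 ^ e.2 := by
    funext p
    simp [quinticForm, add_assoc]
  rw [hsum, tcoeff_sum_monomial fun e => if e = (0, 5) then a else 1]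
  aesop

theorem HasForm.sub_quinticForm {f : ℝ × ℝ → ℝ × ℝ}
    (hf : HasForm f g 5 fun i j => if (i, j) = (2, 1) ∨ (i, j) = (0, 4) then 1 else 0) :
    HasWeightedOrder (3, 2) 11 fun p => g p - quinticForm (tcoeff g 0 5) p := by
  obtain ⟨hg, -, hcoeff⟩ := hf
  refine .of_tcoeff_eq_zero (by simp) (hg.sub (contDiff_quinticForm _)) fun i j hij => ?_
  rw [tcoeff_sub hg (contDiff_quinticForm _), tcoeff_quinticForm, sub_eq_zero]
  by_cases h05 : (i, j) = (0, 5)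
  · rw [if_pos h05, (Prod.mk.inj h05).1, (Prod.mk.inj h05).2]
  · have hlt : i + j < 5 := by
      rw [Prod.mk.injEq] at h05
      dsimp only at hij
      omega
    rw [if_neg h05, hcoeff i j hlt]

end NormalForm

theorem stmt17 (f : ℝ × ℝ → ℝ × ℝ) (g : ℝ × ℝ → ℝ) (hf0 : f 0 = 0)
    (hform : HasForm f g 5 (fun i j => if (i, j) = (2, 1) ∨ (i, j) = (0, 4) then 1 else 0)) :
    (tcoeff g 0 5 ≠ 0 ↔
      ∃ ε : ℝ, (ε = 1 ∨ ε = -1) ∧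
        AEquiv f (fun p => (p.1, p.1 ^ 2 * p.2 + p.2 ^ 4 + ε * p.2 ^ 5))) ∧
    (tcoeff g 0 5 = 0 ↔
      AEquiv f (fun p => (p.1, p.1 ^ 2 * p.2 + p.2 ^ 4))) ∧
    (∀ c d : ℝ,
      JetEquiv 5 (fun p => (p.1, p.1 ^ 2 * p.2 + p.2 ^ 4 + c * p.1 * p.2 ^ 4 + d * p.2 ^ 5))
        (fun p => (p.1, p.1 ^ 2 * p.2 + p.2 ^ 4 + d * p.2 ^ 5))) := by
  have hg := hform.sub_quinticForm
  obtain ⟨hgs, hfg, -⟩ := hform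
  obtain rfl : f = fun p => (p.1, g p) := funext hfg
  have hnormal := aequiv_quinticForm hgs hg
  have hzero : (fun p : ℝ × ℝ => (p.1, p.1 ^ 2 * p.2 + p.2 ^ 4)) =
      fun p => (p.1, quinticForm 0 p) := by
    simp [quinticForm]
  refine ⟨⟨fun ha => ⟨_, ?_, hnormal.trans (aequiv_quinticForm_div_abs ha)⟩, ?_⟩, ?_, fun c d => ?_⟩
  · rcases abs_choice (tcoeff g 0 5) with h | h <;> simp [h, ha]
  · rintro ⟨ε, hε, h⟩
    obtain ⟨d, hd, ha⟩ := exists_ne_zero_eq_mul_of_aequiv_quinticForm hg h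
    rw [ha]
    exact mul_ne_zero (by rcases hε with rfl | rfl <;> norm_num) hd
  · rw [hzero]
    refine ⟨fun ha => ha ▸ hnormal, fun h => ?_⟩
    obtain ⟨d, -, ha⟩ := exists_ne_zero_eq_mul_of_aequiv_quinticForm hg h
    rw [ha, zero_mul]
  · refine (aequiv_quinticForm (a := d) (by fun_prop) ?_).jetEquiv 5
    refine (HasWeightedOrder.monomial c 1 4).congr (by simp) (.of_forall fun p => ?_)
    simp only [quinticForm]
    ring
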